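/- Let 0 < θ < 1, let 1 ≤ q₀, q₁ < ∞ be constants, let p₀ be a globally log-Hölder continuous exponent with 1 ≤ p₀⁻ ≤ p₀⁺ < ∞, and let α₀, α₁ : ℝ^n → ℝ be locally log-Hölder continuous. Define 1/p(·) := (1−θ)/p₀(·), 1/q := (1−θ)/q₀ + θ/q₁, and α(·) := (1−θ)α₀(·) + θα₁(·). Then there exists a constant c > 0 such that whenever complex sequences λ, λ⁰, λ¹ indexed by ℕ₀ × ℤ^n satisfy |λ_{j,m}| ≤ |λ⁰_{j,m}|^{1−θ} |λ¹_{j,m}|^{θ} for all j ∈ ℕ₀ and m ∈ ℤ^n, one has ‖λ‖_{f^{α(·)}_{p(·),q}} ≤ c ‖λ⁰‖_{f^{α₀(·)}_{p₀(·),q₀}}^{1−θ} ‖λ¹‖_{f^{α₁(·)}_{∞,q₁}}^{θ}. -/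

import Mathlib

open MeasureTheory ENNReal Real Set

noncomputable section

/-- Euclidean space ℝ^n. -/
abbrev En (n : ℕ) := EuclideanSpace ℝ (Fin n)

/-- `g` is locally log-Hölder continuous with constant `c`. -/
def LocLogHolder {n : ℕ} (c : ℝ) (g : En n → ℝ) : Prop :=
  0 < c ∧ ∀ x y : En n, |g x - g y| ≤ c / Real.log (Real.exp 1 + 1 / ‖x - y‖)

/-- `g` is globally log-Hölder continuous with local constant `c`. -/
def GlobLogHolder {n : ℕ} (c : ℝ) (g : En n → ℝ) : Prop :=
  LocLogHolder c g ∧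
    ∃ (gi cd : ℝ), 0 < cd ∧ ∀ x : En n, |g x - gi| ≤ cd / Real.log (Real.exp 1 + ‖x‖)

/-- The kernel η_{v,h}(x) = 2^{nv} (1 + 2^v |x|)^{-h}. -/
def eta (n : ℕ) (v : ℕ) (h : ℝ) (x : En n) : ℝ :=
  (2 : ℝ) ^ (n * v) * (1 + (2 : ℝ) ^ v * ‖x‖) ^ (-h)

/-- The dyadic cube Q_{v,m}. -/
def dyadicCube (n : ℕ) (v : ℤ) (m : Fin n → ℤ) : Set (En n) :=
  {x | ∀ i, (m i : ℝ) ≤ (2 : ℝ) ^ v * x i ∧ (2 : ℝ) ^ v * x i < m i + 1}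

/-- Luxemburg (quasi-)norm of an ℝ≥0∞-valued function with variable exponent `p`. -/
def luxNorm {n : ℕ} (p : En n → ℝ) (F : En n → ℝ≥0∞) : ℝ≥0∞ :=
  sInf {c : ℝ≥0∞ | 0 < c ∧ ∫⁻ x, (F x / c) ^ p x ≤ 1}

/-- The mixed Lebesgue-sequence space norm ‖(F_v)_v‖_{L^{p(·)}(ℓ_{q(·)})}. -/
def mixedNorm {n : ℕ} (p q : En n → ℝ) (F : ℕ → En n → ℝ≥0∞) : ℝ≥0∞ :=
  luxNorm p fun x => (∑' v : ℕ, F v x ^ q x) ^ (1 / q x)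

/-- The sequence space norm ‖λ‖_{f^{α(·)}_{p(·),q(·)}}. -/
def seqNorm {n : ℕ} (α p q : En n → ℝ) (lam : ℕ → (Fin n → ℤ) → ℂ) : ℝ≥0∞ :=
  mixedNorm p q fun v x =>
    ∑' m : Fin n → ℤ,
      ENNReal.ofReal ((2 : ℝ) ^ ((v : ℝ) * (α x + n / 2)) * ‖lam v m‖) *
        (dyadicCube n (v : ℤ) m).indicator (fun _ => (1 : ℝ≥0∞)) x

/-- The sequence space norm ‖λ‖_{f^{α(·)}_{∞,q}}. -/
def seqNormInf {n : ℕ} (α : En n → ℝ) (q : ℝ) (lam : ℕ → (Fin n → ℤ) → ℂ) : ℝ≥0∞ :=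
  ⨆ (vQ : ℤ) (mQ : Fin n → ℤ),
    volume (dyadicCube n vQ mQ) ^ (-(1 / q)) *
      (∑' v : ℕ, if vQ ≤ (v : ℤ) then
          ∫⁻ x in dyadicCube n vQ mQ,
            ∑' m : Fin n → ℤ,
              ENNReal.ofReal ((2 : ℝ) ^ ((v : ℝ) * (α x + n / 2) * q) * ‖lam v m‖ ^ q) *
                (dyadicCube n (v : ℤ) m).indicator (fun _ => (1 : ℝ≥0∞)) x
        else 0) ^ (1 / q)

/-- The Calderón product (quasi-)norm associated to two sequence space norms. -/
def calderonNorm {n : ℕ} (N0 N1 : (ℕ → (Fin n → ℤ) → ℂ) → ℝ≥0∞) (θ : ℝ)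
    (lam : ℕ → (Fin n → ℤ) → ℂ) : ℝ≥0∞ :=
  sInf {M : ℝ≥0∞ | ∃ μ ν : ℕ → (Fin n → ℤ) → ℂ, N0 μ ≤ 1 ∧ N1 ν ≤ 1 ∧
    ∀ v m, ENNReal.ofReal ‖lam v m‖ ≤
      M * ENNReal.ofReal ‖μ v m‖ ^ (1 - θ) * ENNReal.ofReal ‖ν v m‖ ^ θ}



/-! ### elementary inequalities -/

lemma aux_tele_concave {a b g : ℝ} (ha : 0 ≤ a) (hab : a ≤ b) (hg0 : 0 ≤ g) (hg1 : g < 1) :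
    (1 - g) * ((b - a) * b ^ (-g)) ≤ b ^ (1 - g) - a ^ (1 - g) := by
  rcases eq_or_lt_of_le (ha.trans hab) with hb | hb
  · have : a = 0 := le_antisymm (hab.trans hb.symm.le) ha
    subst this; simp [← hb]
  · have h := rpow_one_add_le_one_add_mul_self (s := (a - b) / b) (p := 1 - g)
      (by rw [le_div_iff₀ hb]; linarith) (by linarith) (by linarith)
    have e : 1 + (a - b) / b = a / b := by field_simp; ring
    rw [e, Real.div_rpow ha hb.le, div_le_iff₀ (Real.rpow_pos_of_pos hb _)] at h
    have e2 : b ^ (1 - g) = b * b ^ (-g) := by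
      rw [sub_eq_add_neg, Real.rpow_add hb, Real.rpow_one]
    rw [e2] at h ⊢
    have e3 : (1 + (1 - g) * ((a - b) / b)) * (b * b ^ (-g))
      = b * b ^ (-g) + (1 - g) * ((a - b) * b ^ (-g)) := by field_simp
    rw [e3] at h
    linarith

lemma aux_tele_convex {a b k : ℝ} (ha : 0 ≤ a) (hab : a ≤ b) (hk : 1 ≤ k) :
    b ^ k - a ^ k ≤ k * ((b - a) * b ^ (k - 1)) := by
  rcases eq_or_lt_of_le (ha.trans hab) with hb | hb
  · have : a = 0 := le_antisymm (hab.trans hb.symm.le) ha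
    subst this; simp [← hb]
  · have h := one_add_mul_self_le_rpow_one_add (s := (a - b) / b)
      (by rw [le_div_iff₀ hb]; linarith) hk
    have e : 1 + (a - b) / b = a / b := by field_simp; ring
    rw [e, Real.div_rpow ha hb.le, le_div_iff₀ (Real.rpow_pos_of_pos hb _)] at h
    have e2 : b ^ k = b * b ^ (k - 1) := by
      conv_lhs => rw [show k = 1 + (k - 1) by ring, Real.rpow_add hb, Real.rpow_one]
    rw [e2] at h ⊢
    have e3 : (1 + k * ((a - b) / b)) * (b * b ^ (k - 1))
      = b * b ^ (k - 1) + k * ((a - b) * b ^ (k - 1)) := by field_simp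
    rw [e3] at h
    linarith

/-- partial sums -/
def psum (u : ℕ → ℝ) (v : ℕ) : ℝ := ∑ j ∈ Finset.range (v + 1), u j

lemma psum_nonneg {u : ℕ → ℝ} (hu : ∀ v, 0 ≤ u v) (v : ℕ) : 0 ≤ psum u v :=
  Finset.sum_nonneg fun _ _ => hu _

lemma psum_succ (u : ℕ → ℝ) (v : ℕ) : psum u (v + 1) = psum u v + u (v + 1) := by
  simp [psum, Finset.sum_range_succ]

lemma psum_zero (u : ℕ → ℝ) : psum u 0 = u 0 := by simp [psum]

lemma psum_mono {u : ℕ → ℝ} (hu : ∀ v, 0 ≤ u v) : Monotone (psum u) :=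
  monotone_nat_of_le_succ fun v => by rw [psum_succ]; linarith [hu (v + 1)]

lemma le_psum {u : ℕ → ℝ} (hu : ∀ v, 0 ≤ u v) (v : ℕ) : u v ≤ psum u v :=
  Finset.single_le_sum (f := u) (fun i _ => hu i) (by simp)

lemma aux_tele_sum {u : ℕ → ℝ} (hu : ∀ v, 0 ≤ u v) {g : ℝ} (hg0 : 0 ≤ g) (hg1 : g < 1) (L : ℕ) :
    (1 - g) * ∑ v ∈ Finset.range (L + 1), u v * psum u v ^ (-g) ≤ psum u L ^ (1 - g) := by
  induction L with
  | zero =>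
    have := aux_tele_concave (a := 0) le_rfl (hu 0) hg0 hg1
    rw [Real.zero_rpow (by linarith)] at this
    simpa [psum_zero] using this
  | succ L ih =>
    rw [Finset.sum_range_succ, mul_add]
    have := aux_tele_concave (psum_nonneg hu L) (psum_mono hu (Nat.le_succ L)) hg0 hg1
    rw [Nat.succ_eq_add_one] at this
    have e : psum u (L + 1) - psum u L = u (L + 1) := by rw [psum_succ]; ring
    rw [e] at this
    linarith

lemma aux_tele_pow {u : ℕ → ℝ} (hu : ∀ v, 0 ≤ u v) {k : ℝ} (hk : 1 ≤ k) (L : ℕ) :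
    psum u L ^ k ≤ k * ∑ v ∈ Finset.range (L + 1), u v * psum u v ^ (k - 1) := by
  induction L with
  | zero =>
    have := aux_tele_convex (a := 0) le_rfl (hu 0) hk
    rw [Real.zero_rpow (by linarith)] at this
    simpa [psum_zero] using this
  | succ L ih =>
    rw [Finset.sum_range_succ, mul_add]
    have := aux_tele_convex (psum_nonneg hu L) (psum_mono hu (Nat.le_succ L)) hk
    rw [Nat.succ_eq_add_one] at this
    have e : psum u (L + 1) - psum u L = u (L + 1) := by rw [psum_succ]; ring
    rw [e] at this
    linarith

lemma aux_holder {u w : ℕ → ℝ} (hu : ∀ v, 0 ≤ u v) (hw : ∀ v, 0 ≤ w v) {g t : ℝ}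
    (hg0 : 0 < g) (hg1 : g ≤ 1 / 2) (ht0 : 0 < t) (ht1 : t < 1) (L : ℕ) :
    ∑ v ∈ Finset.range (L + 1), u v ^ t * w v ^ (1 - t) ≤
      (2 * psum u L ^ (1 - g)) ^ t *
        (∑ v ∈ Finset.range (L + 1), w v * psum u v ^ (g * t / (1 - t))) ^ (1 - t) := by
  have h1t : 0 < 1 - t := by linarith
  have hpq : (1 / t).HolderConjugate (1 / (1 - t)) := by
    rw [Real.holderConjugate_iff]
    constructor
    · rw [lt_div_iff₀ ht0]; linarith
    · simp
  have hU := psum_nonneg hu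
  have key := Real.inner_le_Lp_mul_Lq_of_nonneg (Finset.range (L + 1))
    (f := fun v => (u v * psum u v ^ (-g)) ^ t)
    (g := fun v => (w v * psum u v ^ (g * t / (1 - t))) ^ (1 - t)) hpq
    (fun i _ => Real.rpow_nonneg (mul_nonneg (hu i) (Real.rpow_nonneg (hU i) _)) _)
    (fun i _ => Real.rpow_nonneg (mul_nonneg (hw i) (Real.rpow_nonneg (hU i) _)) _)
  have e1 : ∀ v, ((u v * psum u v ^ (-g)) ^ t) ^ (1 / t) = u v * psum u v ^ (-g) := fun v => by
    rw [← Real.rpow_mul (mul_nonneg (hu v) (Real.rpow_nonneg (hU v) _)), mul_one_div_cancel ht0.ne',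
      Real.rpow_one]
  have e2 : ∀ v, ((w v * psum u v ^ (g * t / (1 - t))) ^ (1 - t)) ^ (1 / (1 - t))
      = w v * psum u v ^ (g * t / (1 - t)) := fun v => by
    rw [← Real.rpow_mul (mul_nonneg (hw v) (Real.rpow_nonneg (hU v) _)),
      mul_one_div_cancel h1t.ne', Real.rpow_one]
  simp only [e1, e2, one_div_one_div] at key
  calc _ ≤ ∑ v ∈ Finset.range (L + 1), (u v * psum u v ^ (-g)) ^ t *
        (w v * psum u v ^ (g * t / (1 - t))) ^ (1 - t) := by
        apply Finset.sum_le_sum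
        intro v _
        rcases eq_or_lt_of_le (hU v) with h | h
        · have : u v = 0 := le_antisymm ((le_psum hu v).trans h.symm.le) (hu v)
          rw [this, Real.zero_rpow ht0.ne', zero_mul]
          positivity [hw v]
        · rw [Real.mul_rpow (hu v) (Real.rpow_nonneg h.le _),
            Real.mul_rpow (hw v) (Real.rpow_nonneg h.le _), ← Real.rpow_mul h.le,
            ← Real.rpow_mul h.le, div_mul_cancel₀ _ h1t.ne']
          have : psum u v ^ (-g * t) * psum u v ^ (g * t) = 1 := by
            rw [← Real.rpow_add h]; simp
          calc _ = u v ^ t * w v ^ (1 - t) * (psum u v ^ (-g * t) * psum u v ^ (g * t)) := by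
                rw [this, mul_one]
            _ ≤ _ := le_of_eq (by ring)
    _ ≤ _ := key
    _ ≤ _ := by
        gcongr
        · exact Real.rpow_nonneg (Finset.sum_nonneg fun i _ =>
            mul_nonneg (hw i) (Real.rpow_nonneg (hU i) _)) _
        · exact Finset.sum_nonneg fun i _ => mul_nonneg (hu i) (Real.rpow_nonneg (hU i) _)
        · have h := aux_tele_sum hu hg0.le (by linarith : g < 1) L
          have h0 : 0 ≤ ∑ v ∈ Finset.range (L + 1), u v * psum u v ^ (-g) :=
            Finset.sum_nonneg fun i _ => mul_nonneg (hu i) (Real.rpow_nonneg (hU i) _)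
          nlinarith

/-- pointwise estimate for the product sum -/
lemma aux_pointwise {u w : ℕ → ℝ} (hu : ∀ v, 0 ≤ u v) (hw : ∀ v, 0 ≤ w v) {r t k R : ℝ}
    (hr : 0 < r) (hrR : r ≤ R) (ht0 : 0 < t) (ht1 : t < 1) (hk0 : 0 < k)
    (hk : 2 * R * (1 - t) ≤ k * t) (L : ℕ) :
    (∑ v ∈ Finset.range (L + 1), u v ^ t * w v ^ (1 - t)) ^ (r / t) ≤
      2 ^ R * (psum u L ^ r +
        (∑ v ∈ Finset.range (L + 1), w v * (psum u v ^ r) ^ (1 / k)) ^ k) := by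
  have h1t : 0 < 1 - t := by linarith
  have hU := psum_nonneg hu
  set g : ℝ := r * (1 - t) / (k * t) with hg
  have hg0 : 0 < g := by positivity
  have hg1 : g ≤ 1 / 2 := by
    rw [hg, div_le_iff₀ (by positivity)]
    nlinarith
  have h := aux_holder hu hw hg0 hg1 ht0 ht1 L
  have eg : g * t / (1 - t) = r * (1 / k) := by
    rw [hg]; field_simp
  rw [eg] at h
  simp only [Real.rpow_mul (hU _)] at h
  set f := ∑ v ∈ Finset.range (L + 1), w v * (psum u v ^ r) ^ (1 / k) with hf
  have hf0 : 0 ≤ f := Finset.sum_nonneg fun i _ =>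
    mul_nonneg (hw i) (Real.rpow_nonneg (Real.rpow_nonneg (hU i) _) _)
  have hS0 : 0 ≤ ∑ v ∈ Finset.range (L + 1), u v ^ t * w v ^ (1 - t) :=
    Finset.sum_nonneg fun i _ => mul_nonneg (Real.rpow_nonneg (hu i) _) (Real.rpow_nonneg (hw i) _)
  have hA : 0 ≤ psum u L ^ (1 - g) := Real.rpow_nonneg (hU L) _
  calc _ ≤ ((2 * psum u L ^ (1 - g)) ^ t * f ^ (1 - t)) ^ (r / t) :=
        Real.rpow_le_rpow hS0 h (by positivity)
    _ = 2 ^ r * ((psum u L ^ r) ^ (1 - g) * (f ^ k) ^ g) := by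
        rw [Real.mul_rpow (by positivity) (by positivity), ← Real.rpow_mul (by positivity),
          ← Real.rpow_mul hf0, mul_div_cancel₀ _ ht0.ne', Real.mul_rpow (by positivity) hA,
          ← Real.rpow_mul (hU L), ← Real.rpow_mul (hU L), ← Real.rpow_mul hf0]
        have e1 : (1 - t) * (r / t) = k * g := by rw [hg]; field_simp
        rw [e1, mul_comm (1 - g) r, mul_assoc]
    _ ≤ 2 ^ R * (psum u L ^ r + f ^ k) := by
        have hX : 0 ≤ psum u L ^ r := Real.rpow_nonneg (hU L) _
        have hY : 0 ≤ f ^ k := Real.rpow_nonneg hf0 _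
        have := Real.geom_mean_le_arith_mean2_weighted (w₁ := 1 - g) (w₂ := g)
          (by linarith) hg0.le hX hY (by ring)
        have h2 : (psum u L ^ r) ^ (1 - g) * (f ^ k) ^ g ≤ psum u L ^ r + f ^ k := by nlinarith
        have h3 : (2:ℝ) ^ r ≤ 2 ^ R := Real.rpow_le_rpow_of_exponent_le (by norm_num) hrR
        exact mul_le_mul h3 h2 (by positivity) (by positivity)

lemma aux_young {h f k : ℝ} (hh : 0 ≤ h) (hf : 0 ≤ f) (hk : 1 ≤ k) :
    k * (h * f ^ (k - 1)) ≤ f ^ k / 2 + (2 * k) ^ k * h ^ k := by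
  have hk0 : 0 < k := by linarith
  have hP : 0 ≤ (2 * k) ^ k * h ^ k := by positivity
  have hQ : 0 ≤ f ^ k := by positivity
  rcases le_total (2 * k * h) f with hc | hc
  · rcases eq_or_lt_of_le hf with h0 | h0
    · have : h = 0 := by nlinarith
      subst this; simp; positivity
    have e : f ^ k = f * f ^ (k - 1) := by
      conv_lhs => rw [show k = 1 + (k - 1) by ring, Real.rpow_add h0, Real.rpow_one]
    have : 2 * k * h * f ^ (k - 1) ≤ f * f ^ (k - 1) := by gcongr
    nlinarith
  · rcases eq_or_lt_of_le hh with h0 | h0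
    · rw [← h0]; simp [Real.zero_rpow hk0.ne']; positivity
    have e : (2 * k * h) ^ k = (2 * k * h) * (2 * k * h) ^ (k - 1) := by
      have : 0 < 2 * k * h := by positivity
      conv_lhs => rw [show k = 1 + (k - 1) by ring]
      rw [Real.rpow_add (by ring_nf; ring_nf at this; exact this), Real.rpow_one]
      ring_nf
    have h2 : f ^ (k - 1) ≤ (2 * k * h) ^ (k - 1) :=
      Real.rpow_le_rpow hf hc (by linarith)
    have h3 : 0 ≤ (2 * k * h) ^ (k - 1) := by positivity
    rw [Real.mul_rpow (by positivity) hh] at e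
    have : k * (h * f ^ (k - 1)) ≤ k * (h * (2 * k * h) ^ (k - 1)) := by gcongr
    have h5 : 0 ≤ k * (h * (2 * k * h) ^ (k - 1)) := by positivity
    nlinarith


/-- index of the dyadic cube of level `v` containing `x` -/
def idx {n : ℕ} (v : ℕ) (x : En n) : Fin n → ℤ := fun i => ⌊(2 : ℝ) ^ v * x i⌋

lemma mem_cube_iff {n : ℕ} (v : ℕ) (m : Fin n → ℤ) (x : En n) :
    x ∈ dyadicCube n (v : ℤ) m ↔ idx v x = m := by
  simp only [dyadicCube, Set.mem_ofPred_eq, idx, funext_iff, Int.floor_eq_iff, zpow_natCast]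

lemma idx_mono {n : ℕ} {j v : ℕ} (hjv : j ≤ v) {x y : En n} (h : idx v x = idx v y) :
    idx j x = idx j y := by
  funext i
  have hi := congrFun h i
  simp only [idx] at hi ⊢
  have key : ∀ z : ℝ, ⌊(2 : ℝ) ^ j * z⌋ = ⌊(2 : ℝ) ^ v * z⌋ / ((2 ^ (v - j) : ℕ) : ℤ) := by
    intro z
    rw [← Int.floor_div_natCast]
    congr 1
    push_cast
    rw [_root_.eq_div_iff (by positivity)]
    have : (2 : ℝ) ^ v = 2 ^ j * 2 ^ (v - j) := by rw [← pow_add]; congr 1; omega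
    rw [this]; ring
  rw [key, key, hi]

lemma measurable_idx {n : ℕ} (v : ℕ) : Measurable (idx v : En n → Fin n → ℤ) := by
  apply measurable_pi_lambda
  intro i
  apply Int.measurable_floor.comp
  fun_prop

lemma measurableSet_cube {n : ℕ} (v : ℕ) (m : Fin n → ℤ) :
    MeasurableSet (dyadicCube n (v : ℤ) m) := by
  have : dyadicCube n (v : ℤ) m = idx v ⁻¹' {m} := by
    ext x; simp [mem_cube_iff]
  rw [this]
  exact measurable_idx v (measurableSet_singleton m)

lemma volume_cube {n : ℕ} (v : ℕ) (m : Fin n → ℤ) :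
    volume (dyadicCube n (v : ℤ) m) = ENNReal.ofReal (((2 : ℝ) ^ v)⁻¹ ^ n) := by
  have : dyadicCube n (v : ℤ) m = (WithLp.ofLp : En n → Fin n → ℝ) ⁻¹'
      (Set.univ.pi fun i => Set.Ico ((m i : ℝ) / 2 ^ v) (((m i : ℝ) + 1) / 2 ^ v)) := by
    ext x
    simp only [dyadicCube, Set.mem_ofPred_eq, Set.mem_preimage, Set.mem_pi, Set.mem_univ,
      true_imp_iff, Set.mem_Ico, zpow_natCast]
    refine forall_congr' fun i => ?_
    rw [div_le_iff₀ (by positivity), lt_div_iff₀ (by positivity), mul_comm]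
  rw [this, (PiLp.volume_preserving_ofLp (Fin n)).measure_preimage
    (MeasurableSet.univ_pi fun i => measurableSet_Ico).nullMeasurableSet, Real.volume_pi_Ico]
  have e : ∀ i, ((m i : ℝ) + 1) / 2 ^ v - (m i : ℝ) / 2 ^ v = (2 ^ v)⁻¹ := fun i => by
    rw [← sub_div]; ring
  simp only [e, Finset.prod_const, Finset.card_univ, Fintype.card_fin]
  rw [ENNReal.ofReal_pow (by positivity)]

lemma volume_cube_ne_zero {n : ℕ} (v : ℕ) (m : Fin n → ℤ) :
    volume (dyadicCube n (v : ℤ) m) ≠ 0 := by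
  rw [volume_cube]; simp only [ne_eq, ENNReal.ofReal_eq_zero, not_le]; positivity

lemma volume_cube_ne_top {n : ℕ} (v : ℕ) (m : Fin n → ℤ) :
    volume (dyadicCube n (v : ℤ) m) ≠ ⊤ := by
  rw [volume_cube]; exact ENNReal.ofReal_ne_top

/-- a point in the cube -/
def cpt {n : ℕ} (v : ℕ) (m : Fin n → ℤ) : En n := WithLp.toLp 2 fun i => (m i : ℝ) / 2 ^ v

lemma idx_cpt {n : ℕ} (v : ℕ) (m : Fin n → ℤ) : idx v (cpt v m) = m := by
  funext i
  simp only [idx, cpt]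
  rw [mul_div_cancel₀ _ (by positivity)]
  simp

lemma norm_sub_le_of_idx {n : ℕ} {v : ℕ} {x y : En n} (h : idx v x = idx v y) :
    ‖x - y‖ ≤ √n / 2 ^ v := by
  rw [EuclideanSpace.norm_eq]
  have h1 : ∀ i, ‖(x - y).ofLp i‖ ^ 2 ≤ ((2 ^ v)⁻¹ : ℝ) ^ 2 := by
    intro i
    have hi := congrFun h i
    simp only [idx] at hi
    have := Int.abs_sub_lt_one_of_floor_eq_floor hi
    rw [← mul_sub, abs_mul, abs_of_pos (by positivity : (0:ℝ) < 2 ^ v)] at this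
    have h2 : ‖(x - y).ofLp i‖ ≤ (2 ^ v)⁻¹ := by
      rw [Real.norm_eq_abs]
      rw [← one_div, le_div_iff₀ (by positivity), mul_comm]
      simpa using this.le
    gcongr
  calc _ ≤ √(∑ i : Fin n, ((2 ^ v)⁻¹ : ℝ) ^ 2) := Real.sqrt_le_sqrt (Finset.sum_le_sum fun i _ => h1 i)
    _ = _ := by
      rw [Finset.sum_const, Finset.card_univ, Fintype.card_fin, nsmul_eq_mul,
        Real.sqrt_mul (by positivity), Real.sqrt_sq (by positivity), div_eq_mul_inv]

/-- functions constant on the cubes of level `v` -/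
def CubeConst {n : ℕ} {β : Type*} (v : ℕ) (φ : En n → β) : Prop :=
  ∀ x y, idx v x = idx v y → φ x = φ y

lemma CubeConst.measurable {n : ℕ} {β : Type*} [MeasurableSpace β] {v : ℕ} {φ : En n → β}
    (h : CubeConst v φ) : Measurable φ := by
  have : φ = (fun m => φ (cpt v m)) ∘ idx v := by
    funext x
    exact h _ _ (idx_cpt v _).symm
  rw [this]
  exact Measurable.of_discrete.comp (measurable_idx v)

lemma lintegral_cubes {n : ℕ} (v : ℕ) (g : En n → ℝ≥0∞) :
    ∫⁻ x, g x = ∑' m : Fin n → ℤ, ∫⁻ x in dyadicCube n (v : ℤ) m, g x := by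
  rw [← lintegral_iUnion (fun m => measurableSet_cube v m)]
  · have : (⋃ m : Fin n → ℤ, dyadicCube n (v : ℤ) m) = Set.univ := by
      ext x; simp [mem_cube_iff]
    rw [this, Measure.restrict_univ]
  · intro a b hab
    rw [Function.onFun, Set.disjoint_left]
    intro x hx hy
    rw [mem_cube_iff] at hx hy
    exact hab (hx.symm.trans hy)

lemma carleson_level {n : ℕ} {v : ℕ} {φ g : En n → ℝ≥0∞} (hφ : CubeConst v φ)
    (hg : Measurable g)
    (h : ∀ m : Fin n → ℤ, ∫⁻ x in dyadicCube n (v : ℤ) m, g x ≤ volume (dyadicCube n (v : ℤ) m)) :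
    ∫⁻ x, φ x * g x ≤ ∫⁻ x, φ x := by
  rw [lintegral_cubes v, lintegral_cubes v (fun x => φ x)]
  refine ENNReal.tsum_le_tsum fun m => ?_
  have e : ∀ x ∈ dyadicCube n (v : ℤ) m, φ x = φ (cpt v m) := fun x hx =>
    hφ _ _ (((mem_cube_iff _ _ _).1 hx).trans (idx_cpt v m).symm)
  rw [setLIntegral_congr_fun (g := fun x => φ (cpt v m) * g x) (measurableSet_cube v m)
    (fun x hx => by simp only [e x hx]), lintegral_const_mul _ hg,
    setLIntegral_congr_fun (f := φ) (g := fun x => φ (cpt v m)) (measurableSet_cube v m) e,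
    setLIntegral_const]
  gcongr
  exact h m

/-- Carleson embedding -/
lemma carleson_embed {n : ℕ} (L : ℕ) {γ w : ℕ → En n → ℝ≥0∞} (hγ : ∀ v, CubeConst v (γ v))
    (hmono : ∀ v x, γ v x ≤ γ (v + 1) x) (hw : ∀ v, Measurable (w v))
    (hC : ∀ j ≤ L, ∀ m : Fin n → ℤ,
      ∫⁻ x in dyadicCube n (j : ℤ) m, ∑ v ∈ Finset.Ico j (L + 1), w v x ≤
        volume (dyadicCube n (j : ℤ) m)) :
    ∫⁻ x, ∑ v ∈ Finset.range (L + 1), w v x * γ v x ≤ ∫⁻ x, γ L x := by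
  let δ : ℕ → En n → ℝ≥0∞ := fun j x => if j = 0 then γ 0 x else γ j x - γ (j - 1) x
  have hδ : ∀ j, CubeConst j (δ j) := by
    intro j x y hxy
    simp only [δ]
    split_ifs with h0
    · subst h0; exact hγ 0 x y hxy
    · rw [hγ j x y hxy, hγ (j - 1) x y (idx_mono (Nat.sub_le _ _) hxy)]
  have hsum : ∀ v x, γ v x = ∑ j ∈ Finset.range (v + 1), δ j x := by
    intro v x
    induction v with
    | zero => simp [δ]
    | succ v ih =>
      rw [Finset.sum_range_succ, ← ih]
      simp only [δ, Nat.add_eq_zero_iff, one_ne_zero, and_false, if_false, Nat.add_sub_cancel]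
      rw [add_tsub_cancel_of_le (hmono v x)]
  have hswap : ∀ x, ∑ v ∈ Finset.range (L + 1), w v x * γ v x
      = ∑ j ∈ Finset.range (L + 1), δ j x * ∑ v ∈ Finset.Ico j (L + 1), w v x := by
    intro x
    simp only [hsum, Finset.mul_sum]
    rw [Finset.sum_comm' (s' := fun j => Finset.Ico j (L + 1)) (t' := Finset.range (L + 1))]
    · exact Finset.sum_congr rfl fun j _ => Finset.sum_congr rfl fun v _ => mul_comm _ _
    · intro a b; simp only [Finset.mem_range, Finset.mem_Ico]; omega
  simp only [hswap]
  rw [lintegral_finsetSum]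
  · calc _ ≤ ∑ j ∈ Finset.range (L + 1), ∫⁻ x, δ j x := by
          refine Finset.sum_le_sum fun j hj => ?_
          exact carleson_level (hδ j) (Finset.measurable_fun_sum _ fun v _ => hw v)
            (hC j (by simpa [Nat.lt_succ_iff] using hj))
      _ = ∫⁻ x, γ L x := by
          rw [← lintegral_finsetSum]
          · simp only [hsum L]
          · exact fun j _ => (hδ j).measurable
  · exact fun j _ => (hδ j).measurable.mul (Finset.measurable_fun_sum _ fun v _ => hw v)

/-! ### log-Hölder consequences -/

lemma logHolder_level {n : ℕ} {c : ℝ} {g : En n → ℝ} (h : LocLogHolder c g) :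
    ∃ K : ℝ, 0 ≤ K ∧ ∀ (v : ℕ) (x y : En n), idx v x = idx v y → (v : ℝ) * |g x - g y| ≤ K := by
  obtain ⟨hc, h⟩ := h
  have hl2 : 0 < Real.log 2 := Real.log_pos (by norm_num)
  refine ⟨c * ((1 + |Real.log (√n)|) / Real.log 2), by positivity, fun v x y hxy => ?_⟩
  rcases eq_or_ne x y with rfl | hne
  · simp; positivity
  have hd : 0 < ‖x - y‖ := norm_pos_iff.2 (sub_ne_zero.2 hne)
  have hle := norm_sub_le_of_idx hxy
  have hn : 0 < √(n : ℝ) := by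
    by_contra hcon
    have : √(n : ℝ) = 0 := le_antisymm (not_lt.1 hcon) (Real.sqrt_nonneg _)
    rw [this] at hle; simp at hle; exact hne (sub_eq_zero.1 hle)
  set ℓ := Real.log (Real.exp 1 + 1 / ‖x - y‖) with hℓ
  have hℓ1 : 1 ≤ ℓ := by
    rw [hℓ]
    calc (1:ℝ) = Real.log (Real.exp 1) := by simp
      _ ≤ _ := Real.log_le_log (Real.exp_pos _) (by have : 0 < 1 / ‖x - y‖ := by positivity
                                                    linarith)
  have hℓ2 : (v : ℝ) * Real.log 2 - Real.log (√n) ≤ ℓ := by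
    have : (v : ℝ) * Real.log 2 - Real.log (√n) = Real.log (2 ^ v / √n) := by
      rw [Real.log_div (by positivity) hn.ne', Real.log_pow]
    rw [this, hℓ]
    apply Real.log_le_log (by positivity)
    have : (2 : ℝ) ^ v / √n ≤ 1 / ‖x - y‖ := by
      rw [le_div_iff₀ hd, div_mul_eq_mul_div, div_le_one hn]
      rw [le_div_iff₀ (by positivity)] at hle
      linarith
    linarith [Real.exp_pos 1]
  have hv : (v : ℝ) ≤ (1 + |Real.log (√n)|) / Real.log 2 * ℓ := by
    rw [div_mul_eq_mul_div, le_div_iff₀ hl2]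
    have := le_abs_self (Real.log (√n))
    nlinarith [abs_nonneg (Real.log (√n))]
  calc (v : ℝ) * |g x - g y| ≤ ((1 + |Real.log (√n)|) / Real.log 2 * ℓ) * (c / ℓ) := by
        gcongr; exact h x y
    _ = _ := by field_simp

lemma logHolder_decay {n : ℕ} {c : ℝ} {g : En n → ℝ} (h : GlobLogHolder c g) :
    ∃ K : ℝ, 0 ≤ K ∧ ∀ (v : ℕ) (x y : En n), idx v x = idx v y →
      Real.log (1 + ‖y‖) * |g x - g y| ≤ K := by
  obtain ⟨-, gi, cd, hcd, h⟩ := h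
  have hM0 : 0 ≤ Real.log (1 + √n) := Real.log_nonneg (by linarith [Real.sqrt_nonneg (n : ℝ)])
  refine ⟨cd * (2 + Real.log (1 + √n)), by positivity, fun v x y hxy => ?_⟩
  have hle : ‖x - y‖ ≤ √n := (norm_sub_le_of_idx hxy).trans
    (div_le_self (Real.sqrt_nonneg _) (one_le_pow₀ (by norm_num)))
  have h1 : ∀ z : En n, 1 ≤ Real.log (Real.exp 1 + ‖z‖) := fun z => by
    calc (1:ℝ) = Real.log (Real.exp 1) := by simp
      _ ≤ _ := Real.log_le_log (Real.exp_pos _) (by linarith [norm_nonneg z])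
  have he : 1 ≤ Real.exp 1 := by linarith [Real.add_one_le_exp (1:ℝ)]
  have hy : Real.log (1 + ‖y‖) ≤ Real.log (Real.exp 1 + ‖y‖) :=
    Real.log_le_log (by positivity) (by linarith)
  have hx : Real.log (1 + ‖y‖) ≤ (1 + Real.log (1 + √n)) * Real.log (Real.exp 1 + ‖x‖) := by
    have hyx : ‖y‖ ≤ ‖x‖ + √n := by
      have := norm_sub_norm_le y x
      rw [norm_sub_rev] at this; linarith
    calc Real.log (1 + ‖y‖) ≤ Real.log ((Real.exp 1 + ‖x‖) * (1 + √n)) := by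
          apply Real.log_le_log (by positivity)
          nlinarith [norm_nonneg x, Real.sqrt_nonneg (n : ℝ)]
      _ = Real.log (Real.exp 1 + ‖x‖) + Real.log (1 + √n) := by
          rw [Real.log_mul (by positivity) (by positivity)]
      _ ≤ _ := by nlinarith [h1 x]
  have hg : |g x - g y| ≤ cd / Real.log (Real.exp 1 + ‖x‖) + cd / Real.log (Real.exp 1 + ‖y‖) := by
    have := abs_sub_le (g x) gi (g y)
    rw [abs_sub_comm gi] at this
    linarith [h x, h y]
  have hl0 : 0 ≤ Real.log (1 + ‖y‖) := Real.log_nonneg (by linarith [norm_nonneg y])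
  have p1 : 0 < Real.log (Real.exp 1 + ‖x‖) := by linarith [h1 x]
  have p2 : 0 < Real.log (Real.exp 1 + ‖y‖) := by linarith [h1 y]
  calc _ ≤ Real.log (1 + ‖y‖) * (cd / Real.log (Real.exp 1 + ‖x‖))
          + Real.log (1 + ‖y‖) * (cd / Real.log (Real.exp 1 + ‖y‖)) := by
        rw [← mul_add]; gcongr
    _ ≤ ((1 + Real.log (1 + √n)) * Real.log (Real.exp 1 + ‖x‖)) * (cd / Real.log (Real.exp 1 + ‖x‖))
          + Real.log (Real.exp 1 + ‖y‖) * (cd / Real.log (Real.exp 1 + ‖y‖)) := by gcongr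
    _ = _ := by field_simp; ring

lemma LocLogHolder.continuous {n : ℕ} {c : ℝ} {g : En n → ℝ} (h : LocLogHolder c g) :
    Continuous g := by
  obtain ⟨hc, h⟩ := h
  rw [Metric.continuous_iff]
  intro b ε hε
  refine ⟨1 / Real.exp (2 * c / ε), by positivity, fun a ha => ?_⟩
  rcases eq_or_ne a b with rfl | hne
  · simpa using hε
  rw [dist_eq_norm] at ha
  have hd : 0 < ‖a - b‖ := norm_pos_iff.2 (sub_ne_zero.2 hne)
  rw [Real.dist_eq]
  have hl : 2 * c / ε ≤ Real.log (Real.exp 1 + 1 / ‖a - b‖) := by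
    rw [Real.le_log_iff_exp_le (by positivity)]
    rw [lt_div_iff₀ (by positivity)] at ha
    have : Real.exp (2 * c / ε) ≤ 1 / ‖a - b‖ := by
      rw [le_div_iff₀ hd]; linarith
    linarith [Real.exp_pos 1]
  calc _ ≤ _ := h a b
    _ ≤ c / (2 * c / ε) := by gcongr
    _ = ε / 2 := by field_simp
    _ < ε := by linarith


lemma aux_absorb {a b : ℝ≥0∞} (ha : a ≠ ⊤) (h : a ≤ a / 2 + b) : a ≤ 2 * b := by
  have h2 : a / 2 + a / 2 ≤ a / 2 + b := by rwa [ENNReal.add_halves]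
  have h3 : a / 2 ≤ b := by
    rwa [ENNReal.add_le_add_iff_left (ENNReal.div_ne_top ha (by norm_num))] at h2
  calc a = a / 2 + a / 2 := (ENNReal.add_halves a).symm
    _ ≤ b + b := add_le_add h3 h3
    _ = 2 * b := (two_mul b).symm

lemma carleson_pow {n : ℕ} (L : ℕ) {k : ℝ} (hk : 1 ≤ k) {ω h : ℕ → En n → ℝ} {H : En n → ℝ}
    (hω0 : ∀ v x, 0 ≤ ω v x) (hh0 : ∀ v x, 0 ≤ h v x)
    (hωc : ∀ v, CubeConst v (ω v)) (hhc : ∀ v, CubeConst v (h v))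
    (hmono : ∀ v x, h v x ≤ h (v + 1) x)
    (hC : ∀ j ≤ L, ∀ m : Fin n → ℤ,
      ∫⁻ x in dyadicCube n (j : ℤ) m, ∑ v ∈ Finset.Ico j (L + 1), ENNReal.ofReal (ω v x) ≤
        volume (dyadicCube n (j : ℤ) m))
    (hH : ∀ x, h L x ^ k ≤ H x) (hHf : ∫⁻ x, ENNReal.ofReal (H x) ≠ ⊤) :
    ∫⁻ x, ENNReal.ofReal (psum (fun v => ω v x * h v x) L ^ k) ≤
      2 * (ENNReal.ofReal ((2 * k) ^ k) * ∫⁻ x, ENNReal.ofReal (H x)) := by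
  have hk0 : 0 < k := by linarith
  have ht0 : ∀ x v, 0 ≤ ω v x * h v x := fun x v => mul_nonneg (hω0 v x) (hh0 v x)
  set f : ℕ → En n → ℝ := fun v x => psum (fun v => ω v x * h v x) v with hf
  have hf0 : ∀ v x, 0 ≤ f v x := fun v x => psum_nonneg (ht0 x) v
  have hfm : ∀ v x, f v x ≤ f (v + 1) x := fun v x => psum_mono (ht0 x) (Nat.le_succ v)
  have hfc : ∀ v, CubeConst v (f v) := by
    intro v x y hxy
    simp only [hf, psum]
    refine Finset.sum_congr rfl fun j hj => ?_
    have := idx_mono (Nat.lt_succ_iff.1 (Finset.mem_range.1 hj)) hxy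
    rw [hωc j x y this, hhc j x y this]
  have hω1 : ∀ v ≤ L, ∀ x, ω v x ≤ 1 := by
    intro v hv x
    have h1 := hC v hv (idx v x)
    have h2 : ∫⁻ y in dyadicCube n (v : ℤ) (idx v x), ENNReal.ofReal (ω v x) ≤
        volume (dyadicCube n (v : ℤ) (idx v x)) := by
      refine le_trans ?_ h1
      refine setLIntegral_mono' (measurableSet_cube v _) fun y hy => ?_
      rw [hωc v x y ((mem_cube_iff _ _ _).1 hy).symm]
      exact Finset.single_le_sum (f := fun v => ENNReal.ofReal (ω v y)) (fun i _ => bot_le)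
        (by simp only [Finset.mem_Ico]; omega)
    rw [setLIntegral_const] at h2
    have h3 : ENNReal.ofReal (ω v x) ≤ 1 := by
      rw [← ENNReal.mul_le_mul_iff_left (volume_cube_ne_zero v (idx v x))
        (volume_cube_ne_top v (idx v x)), one_mul]
      exact h2
    exact ENNReal.ofReal_le_one.1 h3
  have hhm : ∀ x, Monotone fun v => h v x := fun x => monotone_nat_of_le_succ fun v => hmono v x
  have hfin : ∫⁻ x, ENNReal.ofReal (f L x ^ k) ≠ ⊤ := by
    have hb : ∀ x, f L x ^ k ≤ ((L : ℝ) + 1) ^ k * H x := by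
      intro x
      have : f L x ≤ ((L : ℝ) + 1) * h L x := by
        calc f L x ≤ ∑ j ∈ Finset.range (L + 1), h L x := by
              refine Finset.sum_le_sum fun j hj => ?_
              have hj := Nat.lt_succ_iff.1 (Finset.mem_range.1 hj)
              calc ω j x * h j x ≤ 1 * h L x :=
                    mul_le_mul (hω1 j hj x) (hhm x hj) (hh0 j x) zero_le_one
                _ = _ := one_mul _
          _ = _ := by simp
      calc f L x ^ k ≤ (((L : ℝ) + 1) * h L x) ^ k := Real.rpow_le_rpow (hf0 L x) this hk0.le
        _ = ((L : ℝ) + 1) ^ k * h L x ^ k := Real.mul_rpow (by positivity) (hh0 L x)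
        _ ≤ _ := by gcongr; exact hH x
    refine ne_top_of_le_ne_top (b := ENNReal.ofReal (((L : ℝ) + 1) ^ k) *
      ∫⁻ x, ENNReal.ofReal (H x)) (ENNReal.mul_ne_top ENNReal.ofReal_ne_top hHf) ?_
    rw [← lintegral_const_mul' _ _ ENNReal.ofReal_ne_top]
    refine lintegral_mono fun x => ?_
    rw [← ENNReal.ofReal_mul (by positivity)]
    exact ENNReal.ofReal_le_ofReal (hb x)
  refine aux_absorb hfin ?_
  have hg0 : ∀ v x, 0 ≤ h v x * f v x ^ (k - 1) := fun v x =>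
    mul_nonneg (hh0 v x) (Real.rpow_nonneg (hf0 v x) _)
  have hemb := carleson_embed L (γ := fun v x => ENNReal.ofReal (h v x * f v x ^ (k - 1)))
    (w := fun v x => ENNReal.ofReal (ω v x))
    (fun v x y hxy => by simp only [hhc v x y hxy, hfc v x y hxy])
    (fun v x => ENNReal.ofReal_le_ofReal (mul_le_mul (hmono v x)
      (Real.rpow_le_rpow (hf0 v x) (hfm v x) (by linarith)) (Real.rpow_nonneg (hf0 v x) _)
      (hh0 _ x)))
    (fun v => (hωc v).measurable.ennreal_ofReal) hC
  calc ∫⁻ x, ENNReal.ofReal (f L x ^ k)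
      ≤ ∫⁻ x, ENNReal.ofReal k * ∑ v ∈ Finset.range (L + 1),
          ENNReal.ofReal (ω v x) * ENNReal.ofReal (h v x * f v x ^ (k - 1)) := by
        refine lintegral_mono fun x => ?_
        have e : ∑ v ∈ Finset.range (L + 1),
          ENNReal.ofReal (ω v x) * ENNReal.ofReal (h v x * f v x ^ (k - 1))
          = ENNReal.ofReal (∑ v ∈ Finset.range (L + 1), ω v x * h v x * f v x ^ (k - 1)) := by
          rw [ENNReal.ofReal_sum_of_nonneg
            (fun i _ => mul_nonneg (ht0 x i) (Real.rpow_nonneg (hf0 i x) _))]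
          refine Finset.sum_congr rfl fun v _ => ?_
          rw [← ENNReal.ofReal_mul (hω0 v x), mul_assoc]
        rw [e, ← ENNReal.ofReal_mul hk0.le]
        exact ENNReal.ofReal_le_ofReal (aux_tele_pow (ht0 x) hk L)
    _ = ENNReal.ofReal k * ∫⁻ x, ∑ v ∈ Finset.range (L + 1),
          ENNReal.ofReal (ω v x) * ENNReal.ofReal (h v x * f v x ^ (k - 1)) :=
        lintegral_const_mul' _ _ ENNReal.ofReal_ne_top
    _ ≤ ENNReal.ofReal k * ∫⁻ x, ENNReal.ofReal (h L x * f L x ^ (k - 1)) := by gcongr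
    _ = ∫⁻ x, ENNReal.ofReal k * ENNReal.ofReal (h L x * f L x ^ (k - 1)) :=
        (lintegral_const_mul' _ _ ENNReal.ofReal_ne_top).symm
    _ ≤ ∫⁻ x, (ENNReal.ofReal (f L x ^ k) * 2⁻¹ +
          ENNReal.ofReal ((2 * k) ^ k) * ENNReal.ofReal (H x)) := by
        refine lintegral_mono fun x => ?_
        have e2 : (2⁻¹ : ℝ≥0∞) = ENNReal.ofReal (2⁻¹) := by
          rw [ENNReal.ofReal_inv_of_pos (by norm_num)]; simp
        have hy := aux_young (hh0 L x) (hf0 L x) hk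
        have hHx : 0 ≤ H x := (Real.rpow_nonneg (hh0 L x) _).trans (hH x)
        rw [e2, ← ENNReal.ofReal_mul hk0.le, ← ENNReal.ofReal_mul (Real.rpow_nonneg (hf0 L x) _),
          ← ENNReal.ofReal_mul (by positivity), ← ENNReal.ofReal_add
            (mul_nonneg (Real.rpow_nonneg (hf0 L x) _) (by norm_num)) (by positivity)]
        refine ENNReal.ofReal_le_ofReal (hy.trans ?_)
        rw [div_eq_mul_inv]
        gcongr
        exact hH x
    _ = _ := by
        rw [lintegral_add_left, lintegral_const_mul' _ _ ENNReal.ofReal_ne_top,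
          lintegral_mul_const' _ _ (by norm_num), div_eq_mul_inv]
        have : Measurable (f L) := (hfc L).measurable
        exact ((this.pow_const k).ennreal_ofReal).mul_const _

lemma var_exp {n : ℕ} {r : En n → ℝ} {r0 R K1 K2 M : ℝ} (hr0 : 0 < r0)
    (hr : ∀ x, r0 ≤ r x ∧ r x ≤ R) (hM : 1 ≤ M)
    (hK1 : ∀ (v : ℕ) (x y : En n), idx v x = idx v y → (v : ℝ) * |r x - r y| ≤ K1)
    (hK2 : ∀ (v : ℕ) (x y : En n), idx v x = idx v y → Real.log (1 + ‖y‖) * |r x - r y| ≤ K2) :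
    ∃ C : ℝ, 0 < C ∧ ∀ (v : ℕ) (x y : En n), idx v x = idx v y → ∀ X Y : ℝ, 0 ≤ X → 0 ≤ Y →
      X ≤ M * Y → Y ≤ M * 2 ^ ((n : ℝ) * v / r0) →
      X ^ r x ≤ C * (Y ^ r y + (1 + ‖y‖) ^ (-((n : ℝ) + 1))) := by
  have hR : 0 ≤ R := hr0.le.trans ((hr 0).1.trans (hr 0).2)
  set b : ℝ := ((n : ℝ) + 1) / r0 with hb
  have hb0 : 0 < b := by positivity
  have hMR : 1 ≤ M ^ R := Real.one_le_rpow hM hR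
  set C1 : ℝ := M ^ R * 2 ^ ((n : ℝ) / r0 * K1) + Real.exp (b * K2) + 1 with hC1
  have hc1 : 0 < M ^ R * 2 ^ ((n : ℝ) / r0 * K1) := by positivity
  have hc2 : 0 < Real.exp (b * K2) := Real.exp_pos _
  have hC1pos : 0 < C1 := by positivity
  refine ⟨M ^ R * C1, by positivity, fun v x y hxy X Y hX hY hXY hYv => ?_⟩
  have hM0 : 0 < M := by linarith
  have hrx : 0 < r x := hr0.trans_le (hr x).1
  have hE : 0 < (1 + ‖y‖) ^ (-((n : ℝ) + 1)) := by positivity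
  have hYr : 0 ≤ Y ^ r y := by positivity
  have hd0 := abs_nonneg (r x - r y)
  have hdR : |r x - r y| ≤ R := by
    rw [abs_le]; constructor <;> linarith [(hr x).1, (hr x).2, (hr y).1, (hr y).2]
  have main : Y ^ r x ≤ C1 * (Y ^ r y + (1 + ‖y‖) ^ (-((n : ℝ) + 1))) := by
    rcases eq_or_lt_of_le hY with h0 | hYpos
    · rw [← h0, Real.zero_rpow hrx.ne']
      rw [← h0] at hYr
      positivity
    rcases le_total 1 Y with h1 | h1
    · have e : Y ^ r x ≤ Y ^ r y * Y ^ |r x - r y| := by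
        rw [← Real.rpow_add hYpos]
        exact Real.rpow_le_rpow_of_exponent_le h1 (by linarith [le_abs_self (r x - r y)])
      have e2 : Y ^ |r x - r y| ≤ M ^ R * 2 ^ ((n : ℝ) / r0 * K1) := by
        calc Y ^ |r x - r y| ≤ (M * 2 ^ ((n : ℝ) * v / r0)) ^ |r x - r y| :=
              Real.rpow_le_rpow hY hYv hd0
          _ = M ^ |r x - r y| * 2 ^ ((n : ℝ) / r0 * (v * |r x - r y|)) := by
              rw [Real.mul_rpow hM0.le (by positivity), ← Real.rpow_mul (by norm_num)]
              congr 2; ring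
          _ ≤ _ := by
              gcongr
              · norm_num
              · exact hK1 v x y hxy
      calc Y ^ r x ≤ Y ^ r y * (M ^ R * 2 ^ ((n : ℝ) / r0 * K1)) := e.trans (by gcongr)
        _ ≤ Y ^ r y * C1 := by gcongr; linarith
        _ ≤ _ := by nlinarith
    · rcases le_total Y ((1 + ‖y‖) ^ (-b)) with h2 | h2
      · calc Y ^ r x ≤ Y ^ r0 := Real.rpow_le_rpow_of_exponent_ge hYpos h1 (hr x).1
          _ ≤ ((1 + ‖y‖) ^ (-b)) ^ r0 := Real.rpow_le_rpow hY h2 hr0.le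
          _ = (1 + ‖y‖) ^ (-((n : ℝ) + 1)) := by
              rw [← Real.rpow_mul (by positivity)]
              congr 1; rw [hb]; field_simp
          _ ≤ _ := by nlinarith
      · have e : Y ^ r x ≤ Y ^ r y * Y ^ (-|r x - r y|) := by
          rw [← Real.rpow_add hYpos]
          exact Real.rpow_le_rpow_of_exponent_ge hYpos h1 (by linarith [neg_abs_le (r x - r y)])
        have e2 : Y ^ (-|r x - r y|) ≤ Real.exp (b * K2) := by
          calc Y ^ (-|r x - r y|) ≤ ((1 + ‖y‖) ^ (-b)) ^ (-|r x - r y|) :=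
                Real.rpow_le_rpow_of_nonpos (by positivity) h2 (by linarith)
            _ = Real.exp (b * (Real.log (1 + ‖y‖) * |r x - r y|)) := by
                rw [← Real.rpow_mul (by positivity), Real.rpow_def_of_pos (by positivity)]
                congr 1; ring
            _ ≤ _ := by
                gcongr
                exact hK2 v x y hxy
        calc Y ^ r x ≤ Y ^ r y * Real.exp (b * K2) := e.trans (by gcongr)
          _ ≤ Y ^ r y * C1 := by gcongr; linarith
          _ ≤ _ := by nlinarith
  calc X ^ r x ≤ (M * Y) ^ r x := Real.rpow_le_rpow hX hXY hrx.le
    _ = M ^ r x * Y ^ r x := Real.mul_rpow hM0.le hY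
    _ ≤ M ^ R * (C1 * (Y ^ r y + (1 + ‖y‖) ^ (-((n : ℝ) + 1)))) := by
        gcongr
        exact (hr x).2
    _ = _ := by ring

lemma upper_bd {n : ℕ} {r : En n → ℝ} {r0 M : ℝ} (hr0 : 0 < r0)
    (hr : ∀ x, r0 ≤ r x) (hM : 1 ≤ M) {U : En n → ℝ} {v : ℕ}
    (hq : ∀ x y, idx v x = idx v y → U x ≤ M * U y)
    (hU : ∫⁻ x, ENNReal.ofReal (U x ^ r x) ≤ 1) (y : En n) :
    U y ≤ M * 2 ^ ((n : ℝ) * v / r0) := by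
  by_contra hcon
  push Not at hcon
  have hM0 : 0 < M := by linarith
  set Z := U y / M with hZ
  have hZ1 : 2 ^ ((n : ℝ) * v / r0) < Z := by
    rw [hZ, lt_div_iff₀ hM0]; linarith
  have h1 : (1:ℝ) ≤ 2 ^ ((n : ℝ) * v / r0) := Real.one_le_rpow (by norm_num) (by positivity)
  have hZ2 : ((2:ℝ) ^ v) ^ n < Z ^ r0 := by
    calc ((2:ℝ) ^ v) ^ n = (2 ^ ((n : ℝ) * v / r0)) ^ r0 := by
          rw [← Real.rpow_mul (by norm_num), div_mul_cancel₀ _ hr0.ne', ← pow_mul,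
            ← Real.rpow_natCast]
          push_cast; rw [mul_comm]
      _ < _ := Real.rpow_lt_rpow (by positivity) hZ1 hr0
  have h2 : ENNReal.ofReal (Z ^ r0) * volume (dyadicCube n (v : ℤ) (idx v y)) ≤ 1 := by
    rw [← setLIntegral_const]
    refine le_trans ?_ ((setLIntegral_le_lintegral (dyadicCube n (v : ℤ) (idx v y)) _).trans hU)
    refine setLIntegral_mono' (measurableSet_cube v _) fun z hz => ?_
    have hz' : Z ≤ U z := by
      rw [hZ, div_le_iff₀ hM0, mul_comm]
      exact hq y z ((mem_cube_iff _ _ _).1 hz).symm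
    refine ENNReal.ofReal_le_ofReal ?_
    calc Z ^ r0 ≤ Z ^ r z := Real.rpow_le_rpow_of_exponent_le (by linarith) (hr z)
      _ ≤ _ := Real.rpow_le_rpow (by linarith : 0 ≤ Z) hz' (hr0.le.trans (hr z))
  rw [volume_cube, ← ENNReal.ofReal_mul (Real.rpow_nonneg (by linarith : (0:ℝ) ≤ Z) _), ENNReal.ofReal_le_one, inv_pow,
    ← div_eq_mul_inv, div_le_one (by positivity)] at h2
  linarith

/-- infimum over the cube of level `v` containing `x` -/
def cinf {n : ℕ} (H : En n → ℝ) (v : ℕ) (x : En n) : ℝ :=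
  ⨅ y : {y : En n // idx v y = idx v x}, H y

lemma cinf_bdd {n : ℕ} {H : En n → ℝ} (hH : ∀ x, 0 ≤ H x) (v : ℕ) (x : En n) :
    BddBelow (Set.range fun y : {y : En n // idx v y = idx v x} => H y) :=
  ⟨0, by rintro _ ⟨y, rfl⟩; exact hH _⟩

lemma cinf_le {n : ℕ} {H : En n → ℝ} (hH : ∀ x, 0 ≤ H x) (v : ℕ) (x : En n) :
    cinf H v x ≤ H x := ciInf_le (cinf_bdd hH v x) ⟨x, rfl⟩

lemma le_cinf {n : ℕ} {H : En n → ℝ} {v : ℕ} {x : En n} {a : ℝ}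
    (h : ∀ y, idx v x = idx v y → a ≤ H y) : a ≤ cinf H v x := by
  have : Nonempty {y : En n // idx v y = idx v x} := ⟨⟨x, rfl⟩⟩
  exact le_ciInf fun y => h y y.2.symm

lemma cinf_const {n : ℕ} (H : En n → ℝ) (v : ℕ) : CubeConst v (cinf H v) := by
  intro x y hxy
  simp only [cinf]
  rw [hxy]

lemma cinf_mono {n : ℕ} {H : En n → ℝ} (hH : ∀ x, 0 ≤ H x) (v : ℕ) (x : En n) :
    cinf H v x ≤ cinf H (v + 1) x :=
  le_cinf fun y hy => by
    rw [cinf_const H v x y (idx_mono (Nat.le_succ v) hy)]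
    exact cinf_le hH v y

lemma core {n : ℕ} {r : En n → ℝ} {r0 R K1 K2 M t : ℝ} (hr0 : 0 < r0)
    (hrm : Measurable r)
    (hr : ∀ x, r0 ≤ r x ∧ r x ≤ R) (hM : 1 ≤ M)
    (hK1 : ∀ (v : ℕ) (x y : En n), idx v x = idx v y → (v : ℝ) * |r x - r y| ≤ K1)
    (hK2 : ∀ (v : ℕ) (x y : En n), idx v x = idx v y → Real.log (1 + ‖y‖) * |r x - r y| ≤ K2)
    (ht0 : 0 < t) (ht1 : t < 1) :
    ∃ C : ℝ≥0∞, C ≠ ⊤ ∧ ∀ (u w : ℕ → En n → ℝ), (∀ v x, 0 ≤ u v x) → (∀ v x, 0 ≤ w v x) →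
      (∀ v, Measurable (u v)) → (∀ v, Measurable (w v)) →
      (∀ v x y, idx v x = idx v y → u v x ≤ M * u v y) →
      (∀ v x y, idx v x = idx v y → w v x ≤ M * w v y) →
      (∀ L, ∫⁻ x, ENNReal.ofReal (psum (fun v => u v x) L ^ r x) ≤ 1) →
      (∀ j L : ℕ, ∀ m : Fin n → ℤ, ∫⁻ x in dyadicCube n (j : ℤ) m,
        ∑ v ∈ Finset.Ico j (L + 1), ENNReal.ofReal (w v x) ≤ volume (dyadicCube n (j : ℤ) m)) →
      ∀ L, ∫⁻ x, ENNReal.ofReal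
        ((∑ v ∈ Finset.range (L + 1), u v x ^ t * w v x ^ (1 - t)) ^ (r x / t)) ≤ C := by
  obtain ⟨C0, hC0, hvar⟩ := var_exp hr0 hr hM hK1 hK2
  have hR : 0 < R := hr0.trans_le ((hr 0).1.trans (hr 0).2)
  have hM0 : 0 < M := by linarith
  set k : ℝ := max 1 (2 * R * (1 - t) / t) with hkdef
  have hk1 : 1 ≤ k := le_max_left _ _
  have hk0 : 0 < k := by linarith
  have hkt : 2 * R * (1 - t) ≤ k * t := by
    rw [← div_le_iff₀ ht0]; exact le_max_right _ _
  set J : ℝ≥0∞ := ∫⁻ y : En n, ENNReal.ofReal ((1 + ‖y‖) ^ (-((n : ℝ) + 1))) with hJ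
  have hJf : J ≠ ⊤ := by
    refine (finite_integral_one_add_norm (E := En n) (μ := volume) (r := (n : ℝ) + 1) ?_).ne
    simp
  set D : ℝ := (M * M * C0 ^ (1 / k)) ^ k with hD
  have hD0 : 0 ≤ D := by positivity
  refine ⟨ENNReal.ofReal (2 ^ R) * (1 + ENNReal.ofReal D *
    (2 * (ENNReal.ofReal ((2 * k) ^ k) * (1 + J)))), ?_, ?_⟩
  · refine ENNReal.mul_ne_top ENNReal.ofReal_ne_top (ENNReal.add_ne_top.2 ⟨by norm_num, ?_⟩)
    refine ENNReal.mul_ne_top ENNReal.ofReal_ne_top (ENNReal.mul_ne_top (by norm_num) ?_)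
    exact ENNReal.mul_ne_top ENNReal.ofReal_ne_top (ENNReal.add_ne_top.2 ⟨by norm_num, hJf⟩)
  intro u w hu hw hum hwm huq hwq hU hC L
  set U : ℕ → En n → ℝ := fun v x => psum (fun v => u v x) v with hUdef
  have hU0 : ∀ v x, 0 ≤ U v x := fun v x => psum_nonneg (fun v => hu v x) v
  have hUq : ∀ v x y, idx v x = idx v y → U v x ≤ M * U v y := by
    intro v x y hxy
    simp only [hUdef, psum]
    rw [Finset.mul_sum]
    refine Finset.sum_le_sum fun j hj => ?_
    exact huq j x y (idx_mono (Nat.lt_succ_iff.1 (Finset.mem_range.1 hj)) hxy)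
  have hUm : Measurable (U L) := by
    simp only [hUdef, psum]
    exact Finset.measurable_fun_sum _ fun v _ => hum v
  set H : En n → ℝ := fun y => U L y ^ r y + (1 + ‖y‖) ^ (-((n : ℝ) + 1)) with hH
  have hE0 : ∀ y : En n, 0 ≤ (1 + ‖y‖) ^ (-((n : ℝ) + 1)) := fun y => by positivity
  have hH0 : ∀ y, 0 ≤ H y := fun y => add_nonneg (Real.rpow_nonneg (hU0 L y) _) (hE0 y)
  have hHint : ∫⁻ y, ENNReal.ofReal (H y) ≤ 1 + J := by
    calc _ = ∫⁻ y, (ENNReal.ofReal (U L y ^ r y) + ENNReal.ofReal ((1 + ‖y‖) ^ (-((n : ℝ) + 1)))) := by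
          refine lintegral_congr fun y => ?_
          exact ENNReal.ofReal_add (Real.rpow_nonneg (hU0 L y) _) (hE0 y)
      _ = _ := lintegral_add_left ((hUm.pow hrm).ennreal_ofReal) _
      _ ≤ _ := by gcongr; exact hU L
  have hkey : ∀ v ≤ L, ∀ x, U v x ^ r x ≤ C0 * cinf H v x := by
    intro v hv x
    rw [mul_comm, ← div_le_iff₀ hC0]
    refine le_cinf fun y hxy => ?_
    rw [div_le_iff₀ hC0, mul_comm]
    refine (hvar v x y hxy (U v x) (U v y) (hU0 v x) (hU0 v y) (hUq v x y hxy)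
      (upper_bd hr0 (fun x => (hr x).1) hM (hUq v) (hU v) y)).trans ?_
    have : U v y ^ r y ≤ U L y ^ r y :=
      Real.rpow_le_rpow (hU0 v y) (psum_mono (fun v => hu v y) hv) (hr0.le.trans (hr y).1)
    simp only [hH]
    gcongr
  have hcn : ∀ v x, 0 ≤ cinf H v x := fun v x => le_cinf fun y _ => hH0 y
  set ω : ℕ → En n → ℝ := fun v x => w v (cpt v (idx v x)) / M with hω
  set h : ℕ → En n → ℝ := fun v x => cinf H v x ^ (1 / k) with hh
  have hω0 : ∀ v x, 0 ≤ ω v x := fun v x => div_nonneg (hw _ _) hM0.le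
  have hh0 : ∀ v x, 0 ≤ h v x := fun v x => Real.rpow_nonneg (hcn v x) _
  have hωw : ∀ v x, ω v x ≤ w v x := fun v x => by
    simp only [hω]
    rw [div_le_iff₀ hM0, mul_comm]
    exact hwq v _ _ (idx_cpt v _)
  have hwω : ∀ v x, w v x ≤ M * M * ω v x := fun v x => by
    have : M * M * ω v x = M * w v (cpt v (idx v x)) := by simp only [hω]; field_simp
    rw [this]
    exact hwq v _ _ (idx_cpt v _).symm
  have hpow := carleson_pow L hk1 (ω := ω) (h := h) (H := H) hω0 hh0
    (fun v x y hxy => by simp only [hω, hxy])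
    (fun v x y hxy => by simp only [hh, cinf_const H v x y hxy])
    (fun v x => Real.rpow_le_rpow (hcn v x) (cinf_mono hH0 v x) (by positivity))
    (fun j _ m => le_trans (lintegral_mono fun x => Finset.sum_le_sum fun v _ =>
      ENNReal.ofReal_le_ofReal (hωw v x)) (hC j L m))
    (fun x => by
      simp only [hh]
      rw [← Real.rpow_mul (hcn L x), one_div_mul_cancel hk0.ne', Real.rpow_one]
      exact cinf_le hH0 L x)
    (ne_top_of_le_ne_top (ENNReal.add_ne_top.2 ⟨by norm_num, hJf⟩) hHint)
  set f : En n → ℝ := fun x => psum (fun v => ω v x * h v x) L with hf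
  have hf0 : ∀ x, 0 ≤ f x := fun x => psum_nonneg (fun v => mul_nonneg (hω0 v x) (hh0 v x)) L
  have hpt : ∀ x, (∑ v ∈ Finset.range (L + 1), u v x ^ t * w v x ^ (1 - t)) ^ (r x / t) ≤
      2 ^ R * (U L x ^ r x + D * f x ^ k) := by
    intro x
    refine (aux_pointwise (fun v => hu v x) (fun v => hw v x) (hr0.trans_le (hr x).1) (hr x).2
      ht0 ht1 hk0 hkt L).trans ?_
    have hs : ∑ v ∈ Finset.range (L + 1), w v x * (psum (fun v => u v x) v ^ r x) ^ (1 / k)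
        ≤ M * M * C0 ^ (1 / k) * f x := by
      simp only [hf, psum]
      rw [Finset.mul_sum]
      refine Finset.sum_le_sum fun v hv => ?_
      have hv := Nat.lt_succ_iff.1 (Finset.mem_range.1 hv)
      calc _ ≤ (M * M * ω v x) * (C0 * cinf H v x) ^ (1 / k) := by
            refine mul_le_mul (hwω v x) ?_ ?_ ?_
            · exact Real.rpow_le_rpow (Real.rpow_nonneg (hU0 v x) _) (hkey v hv x) (by positivity)
            · exact Real.rpow_nonneg (Real.rpow_nonneg (hU0 v x) _) _
            · exact mul_nonneg (by positivity) (hω0 v x)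
        _ = _ := by
            rw [Real.mul_rpow hC0.le (hcn v x)]
            simp only [hh]; ring
    have hs0 : 0 ≤ ∑ v ∈ Finset.range (L + 1),
        w v x * (psum (fun v => u v x) v ^ r x) ^ (1 / k) :=
      Finset.sum_nonneg fun v _ => mul_nonneg (hw v x)
        (Real.rpow_nonneg (Real.rpow_nonneg (hU0 v x) _) _)
    have := Real.rpow_le_rpow hs0 hs hk0.le
    rw [Real.mul_rpow (by positivity) (hf0 x)] at this
    gcongr
  calc _ ≤ ∫⁻ x, ENNReal.ofReal (2 ^ R) *
        (ENNReal.ofReal (U L x ^ r x) + ENNReal.ofReal D * ENNReal.ofReal (f x ^ k)) := by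
        refine lintegral_mono fun x => ?_
        rw [← ENNReal.ofReal_mul hD0, ← ENNReal.ofReal_add (Real.rpow_nonneg (hU0 L x) _)
          (mul_nonneg hD0 (Real.rpow_nonneg (hf0 x) _)), ← ENNReal.ofReal_mul (by positivity)]
        exact ENNReal.ofReal_le_ofReal (hpt x)
    _ = ENNReal.ofReal (2 ^ R) * ((∫⁻ x, ENNReal.ofReal (U L x ^ r x)) +
          ENNReal.ofReal D * ∫⁻ x, ENNReal.ofReal (f x ^ k)) := by
        rw [lintegral_const_mul' _ _ ENNReal.ofReal_ne_top,
          lintegral_add_left ((hUm.pow hrm).ennreal_ofReal),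
          lintegral_const_mul' _ _ ENNReal.ofReal_ne_top]
    _ ≤ _ := by
        gcongr
        · exact hU L
        · exact hpow.trans (by gcongr)


/-- the weighted coefficient at `x` -/
def wc {n : ℕ} (α : En n → ℝ) (lam : ℕ → (Fin n → ℤ) → ℂ) (v : ℕ) (x : En n) : ℝ :=
  (2 : ℝ) ^ ((v : ℝ) * (α x + n / 2)) * ‖lam v (idx v x)‖

lemma wc_nonneg {n : ℕ} (α : En n → ℝ) (lam : ℕ → (Fin n → ℤ) → ℂ) (v : ℕ) (x : En n) :
    0 ≤ wc α lam v x := by unfold wc; positivity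

lemma wc_measurable {n : ℕ} {α : En n → ℝ} (hα : Measurable α) (lam : ℕ → (Fin n → ℤ) → ℂ)
    (v : ℕ) : Measurable (wc α lam v) := by
  unfold wc
  refine Measurable.mul ?_ ?_
  · exact Measurable.pow measurable_const (by fun_prop)
  · exact (Measurable.of_discrete (f := fun m => ‖lam v m‖)).comp (measurable_idx v)

lemma wc_quasi {n : ℕ} {α : En n → ℝ} {K : ℝ} (lam : ℕ → (Fin n → ℤ) → ℂ)
    (hK : ∀ (v : ℕ) (x y : En n), idx v x = idx v y → (v : ℝ) * |α x - α y| ≤ K)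
    (v : ℕ) (x y : En n) (h : idx v x = idx v y) : wc α lam v x ≤ 2 ^ K * wc α lam v y := by
  unfold wc
  rw [h, ← mul_assoc, ← Real.rpow_add (by norm_num)]
  gcongr
  · norm_num
  · have := hK v x y h
    have h2 : (v : ℝ) * (α x - α y) ≤ v * |α x - α y| := by gcongr; exact le_abs_self _
    linarith

lemma collapse {n : ℕ} (v : ℕ) (x : En n) (φ : (Fin n → ℤ) → ℝ≥0∞) :
    ∑' m : Fin n → ℤ, φ m * (dyadicCube n (v : ℤ) m).indicator (fun _ => (1 : ℝ≥0∞)) x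
      = φ (idx v x) := by
  rw [tsum_eq_single (idx v x)]
  · rw [Set.indicator_of_mem ((mem_cube_iff _ _ _).2 rfl), mul_one]
  · intro m hm
    rw [Set.indicator_of_notMem, mul_zero]
    rw [mem_cube_iff]
    exact fun h => hm h.symm

lemma seqNorm_eq {n : ℕ} (α p : En n → ℝ) (q : ℝ) (lam : ℕ → (Fin n → ℤ) → ℂ) :
    seqNorm α p (fun _ => q) lam = sInf {c : ℝ≥0∞ | 0 < c ∧
      ∫⁻ x, ((∑' v : ℕ, ENNReal.ofReal (wc α lam v x) ^ q) ^ (1 / q) / c) ^ p x ≤ 1} := by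
  simp only [seqNorm, mixedNorm, luxNorm, wc]
  have : ∀ (v : ℕ) (x : En n), ∑' m : Fin n → ℤ,
      ENNReal.ofReal ((2 : ℝ) ^ ((v : ℝ) * (α x + n / 2)) * ‖lam v m‖) *
        (dyadicCube n (v : ℤ) m).indicator (fun _ => (1 : ℝ≥0∞)) x =
      ENNReal.ofReal ((2 : ℝ) ^ ((v : ℝ) * (α x + n / 2)) * ‖lam v (idx v x)‖) := fun v x =>
    collapse v x fun m => ENNReal.ofReal ((2 : ℝ) ^ ((v : ℝ) * (α x + n / 2)) * ‖lam v m‖)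
  simp only [this]

lemma seqNormInf_carleson {n : ℕ} {α : En n → ℝ} {q : ℝ} (hq : 1 ≤ q)
    (lam : ℕ → (Fin n → ℤ) → ℂ) (j : ℕ) (m : Fin n → ℤ) :
    (∑' v : ℕ, if j ≤ v then ∫⁻ x in dyadicCube n (j : ℤ) m, ENNReal.ofReal (wc α lam v x ^ q)
      else 0) ≤ seqNormInf α q lam ^ q * volume (dyadicCube n (j : ℤ) m) := by
  have hq0 : 0 < q := by linarith
  have h : volume (dyadicCube n (j : ℤ) m) ^ (-(1 / q)) * (∑' v : ℕ, if j ≤ v then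
      ∫⁻ x in dyadicCube n (j : ℤ) m, ENNReal.ofReal (wc α lam v x ^ q) else 0) ^ (1 / q)
      ≤ seqNormInf α q lam := by
    unfold seqNormInf
    refine le_trans (le_of_eq ?_) (le_iSup₂ (j : ℤ) m)
    simp only [Nat.cast_le]
    congr 2
    refine tsum_congr fun v => ?_
    split_ifs
    · refine lintegral_congr fun x => ?_
      rw [collapse v x fun m => ENNReal.ofReal ((2 : ℝ) ^ ((v : ℝ) * (α x + n / 2) * q) * ‖lam v m‖ ^ q)]
      rw [wc, Real.mul_rpow (by positivity) (norm_nonneg _), ← Real.rpow_mul (by norm_num)]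
    · rfl
  set S := (∑' v : ℕ, if j ≤ v then ∫⁻ x in dyadicCube n (j : ℤ) m,
    ENNReal.ofReal (wc α lam v x ^ q) else 0)
  set V := volume (dyadicCube n (j : ℤ) m) with hV
  have hV0 : V ≠ 0 := volume_cube_ne_zero j m
  have hVt : V ≠ ⊤ := volume_cube_ne_top j m
  have h2 := ENNReal.rpow_le_rpow h hq0.le
  rw [ENNReal.mul_rpow_of_nonneg _ _ hq0.le, ← ENNReal.rpow_mul, ← ENNReal.rpow_mul,
    one_div_mul_cancel hq0.ne', neg_mul, one_div_mul_cancel hq0.ne', ENNReal.rpow_one,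
    ENNReal.rpow_neg_one] at h2
  calc S = V * (V⁻¹ * S) := by rw [← mul_assoc, ENNReal.mul_inv_cancel hV0 hVt, one_mul]
    _ ≤ V * seqNormInf α q lam ^ q := by gcongr
    _ = _ := mul_comm _ _

lemma seqNormInf_zero {n : ℕ} {α : En n → ℝ} {q K : ℝ} (hq : 1 ≤ q)
    (hK : ∀ (v : ℕ) (x y : En n), idx v x = idx v y → (v : ℝ) * |α x - α y| ≤ K)
    (lam : ℕ → (Fin n → ℤ) → ℂ) (h0 : seqNormInf α q lam = 0) (v : ℕ) (m : Fin n → ℤ) :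
    lam v m = 0 := by
  have hq0 : 0 < q := by linarith
  have h := seqNormInf_carleson (α := α) hq lam v m
  rw [h0, ENNReal.zero_rpow_of_pos hq0, zero_mul] at h
  by_contra hne
  have hpos : 0 < wc α lam v (cpt v m) := by
    unfold wc; rw [idx_cpt]; have := norm_pos_iff.2 hne; positivity
  have h1 : ∫⁻ x in dyadicCube n (v : ℤ) m, ENNReal.ofReal (wc α lam v x ^ q) = 0 := by
    refine le_antisymm (le_trans ?_ h) bot_le
    refine le_trans (le_of_eq ?_) (ENNReal.le_tsum v)
    simp
  have h2 : ENNReal.ofReal ((wc α lam v (cpt v m) / 2 ^ K) ^ q) *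
      volume (dyadicCube n (v : ℤ) m) ≤ 0 := by
    rw [← setLIntegral_const, ← h1]
    refine setLIntegral_mono' (measurableSet_cube v m) fun x hx => ENNReal.ofReal_le_ofReal ?_
    refine Real.rpow_le_rpow (by positivity) ?_ hq0.le
    rw [div_le_iff₀ (by positivity), mul_comm]
    exact wc_quasi lam hK v _ _ ((idx_cpt v m).trans ((mem_cube_iff _ _ _).1 hx).symm)
  have h3 : 0 < (wc α lam v (cpt v m) / 2 ^ K) ^ q := by positivity
  rcases mul_eq_zero.1 (le_antisymm h2 bot_le) with h | h
  · rw [ENNReal.ofReal_eq_zero] at h; linarith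
  · exact volume_cube_ne_zero v m h

lemma seqNorm_zero {n : ℕ} {α p : En n → ℝ} {q K : ℝ} (hq : 1 ≤ q) (hp : ∀ x, 1 ≤ p x)
    (hK : ∀ (v : ℕ) (x y : En n), idx v x = idx v y → (v : ℝ) * |α x - α y| ≤ K)
    (lam : ℕ → (Fin n → ℤ) → ℂ) (h0 : seqNorm α p (fun _ => q) lam = 0) (v : ℕ)
    (m : Fin n → ℤ) : lam v m = 0 := by
  have hq0 : 0 < q := by linarith
  by_contra hne
  have hpos : 0 < wc α lam v (cpt v m) := by
    unfold wc; rw [idx_cpt]; have := norm_pos_iff.2 hne; positivity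
  set a := ENNReal.ofReal (wc α lam v (cpt v m) / 2 ^ K) with ha
  have ha0 : 0 < a := ENNReal.ofReal_pos.2 (by positivity)
  set V := volume (dyadicCube n (v : ℤ) m) with hV
  have hV0 : V ≠ 0 := volume_cube_ne_zero v m
  rw [seqNorm_eq] at h0
  have hε : 0 < min a (a * V) := lt_min ha0 (ENNReal.mul_pos ha0.ne' hV0)
  rw [← h0, sInf_lt_iff] at hε
  obtain ⟨c, ⟨hc0, hc⟩, hcε⟩ := hε
  have hca : c < a := hcε.trans_le (min_le_left _ _)
  have hcV : c < a * V := hcε.trans_le (min_le_right _ _)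
  have hct : c ≠ ⊤ := hca.ne_top
  have h2 : a / c * V ≤ 1 := by
    rw [hV, ← setLIntegral_const]
    refine le_trans ?_ ((setLIntegral_le_lintegral (dyadicCube n (v : ℤ) m) _).trans hc)
    refine setLIntegral_mono' (measurableSet_cube v m) fun x hx => ?_
    have h3 : a ≤ (∑' v : ℕ, ENNReal.ofReal (wc α lam v x) ^ q) ^ (1 / q) := by
      have : a ^ q ≤ ∑' v : ℕ, ENNReal.ofReal (wc α lam v x) ^ q := by
        refine le_trans ?_ (ENNReal.le_tsum v)
        refine ENNReal.rpow_le_rpow (ENNReal.ofReal_le_ofReal ?_) hq0.le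
        rw [div_le_iff₀ (by positivity), mul_comm]
        exact wc_quasi lam hK v _ _ ((idx_cpt v m).trans ((mem_cube_iff _ _ _).1 hx).symm)
      have := ENNReal.rpow_le_rpow this (by positivity : 0 ≤ 1 / q)
      rwa [← ENNReal.rpow_mul, mul_one_div_cancel hq0.ne', ENNReal.rpow_one] at this
    have h4 : 1 ≤ a / c := by
      rw [ENNReal.le_div_iff_mul_le (Or.inl hc0.ne') (Or.inl hct), one_mul]; exact hca.le
    calc a / c = (a / c) ^ (1 : ℝ) := (ENNReal.rpow_one _).symm
      _ ≤ (a / c) ^ p x := ENNReal.rpow_le_rpow_of_exponent_le h4 (hp x)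
      _ ≤ _ := ENNReal.rpow_le_rpow (by gcongr) (zero_le_one.trans (hp x))
  rw [← ENNReal.mul_div_right_comm, ENNReal.div_le_iff hc0.ne' hct, one_mul] at h2
  exact absurd hcV (not_lt.2 h2)

lemma seqNorm_of_zero {n : ℕ} {α p : En n → ℝ} {q : ℝ} (hq : 0 < q) (hp : ∀ x, 0 < p x)
    (lam : ℕ → (Fin n → ℤ) → ℂ) (h : ∀ v m, lam v m = 0) : seqNorm α p (fun _ => q) lam = 0 := by
  rw [seqNorm_eq]
  refine le_antisymm (le_of_forall_gt fun c hc => ?_) bot_le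
  rw [sInf_lt_iff]
  obtain ⟨d, hd0, hd⟩ := exists_between hc
  refine ⟨d, ⟨hd0, ?_⟩, hd⟩
  have : ∀ v x, wc α lam v x = 0 := fun v x => by simp [wc, h]
  simp [this, ENNReal.zero_rpow_of_pos hq, ENNReal.zero_rpow_of_pos (inv_pos.2 hq), hp]

lemma scaled {n : ℕ} {θ q₀ q₁ q C K0 K1 M t : ℝ} (hθ0 : 0 < θ) (hθ1 : θ < 1)
    (hq₀ : 1 ≤ q₀) (hq₁ : 1 ≤ q₁) (hqp : 0 < q) {p₀ α₀ α₁ p α : En n → ℝ}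
    (hp₀m : Measurable p₀) (hp₀ : ∀ x, 1 ≤ p₀ x)
    (hα₀m : Measurable α₀) (hα₁m : Measurable α₁)
    (hK0 : ∀ (v : ℕ) (x y : En n), idx v x = idx v y → (v : ℝ) * |α₀ x - α₀ y| ≤ K0)
    (hK1 : ∀ (v : ℕ) (x y : En n), idx v x = idx v y → (v : ℝ) * |α₁ x - α₁ y| ≤ K1)
    (hM0 : ((2:ℝ) ^ K0) ^ q₀ ≤ M) (hM1 : ((2:ℝ) ^ K1) ^ q₁ ≤ M)
    (hp : ∀ x, p x = p₀ x / (1 - θ))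
    (ht : t = (1 - θ) * q / q₀) (ht1 : 1 - t = θ * q / q₁)
    (hα : ∀ x, α x = (1 - θ) * α₀ x + θ * α₁ x) (hC1 : 1 ≤ C)
    (hcore : ∀ (u w : ℕ → En n → ℝ), (∀ v x, 0 ≤ u v x) → (∀ v x, 0 ≤ w v x) →
      (∀ v, Measurable (u v)) → (∀ v, Measurable (w v)) →
      (∀ v x y, idx v x = idx v y → u v x ≤ M * u v y) →
      (∀ v x y, idx v x = idx v y → w v x ≤ M * w v y) →
      (∀ L, ∫⁻ x, ENNReal.ofReal (psum (fun v => u v x) L ^ (p₀ x / q₀)) ≤ 1) →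
      (∀ j L : ℕ, ∀ m : Fin n → ℤ, ∫⁻ x in dyadicCube n (j : ℤ) m,
        ∑ v ∈ Finset.Ico j (L + 1), ENNReal.ofReal (w v x) ≤ volume (dyadicCube n (j : ℤ) m)) →
      ∀ L, ∫⁻ x, ENNReal.ofReal
        ((∑ v ∈ Finset.range (L + 1), u v x ^ t * w v x ^ (1 - t)) ^ (p₀ x / q₀ / t)) ≤
          ENNReal.ofReal C)
    {lam lam0 lam1 : ℕ → (Fin n → ℤ) → ℂ}
    (hlam : ∀ (j : ℕ) (m : Fin n → ℤ), ‖lam j m‖ ≤ ‖lam0 j m‖ ^ (1 - θ) * ‖lam1 j m‖ ^ θ)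
    {c0 c1 : ℝ} (hc0 : 0 < c0) (hc1 : 0 < c1)
    (h0 : ∫⁻ x, ((∑' v : ℕ, ENNReal.ofReal (wc α₀ lam0 v x) ^ q₀) ^ (1 / q₀) /
      ENNReal.ofReal c0) ^ p₀ x ≤ 1)
    (h1 : seqNormInf α₁ q₁ lam1 ≤ ENNReal.ofReal c1) :
    seqNorm α p (fun _ => q) lam ≤ ENNReal.ofReal C * ENNReal.ofReal (c0 ^ (1 - θ) * c1 ^ θ) := by
  have hq₀p : 0 < q₀ := by linarith
  have hq₁p : 0 < q₁ := by linarith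
  have hθ' : 0 < 1 - θ := by linarith
  have htp : 0 < t := by rw [ht]; positivity
  have htp1 : 0 < 1 - t := by rw [ht1]; positivity
  set A := wc α₀ lam0 with hA
  set B := wc α₁ lam1 with hB
  have hA0 : ∀ v x, 0 ≤ A v x := wc_nonneg _ _
  have hB0 : ∀ v x, 0 ≤ B v x := wc_nonneg _ _
  set u : ℕ → En n → ℝ := fun v x => (A v x / c0) ^ q₀ with hu
  set w : ℕ → En n → ℝ := fun v x => (B v x / c1) ^ q₁ with hw
  have hu0 : ∀ v x, 0 ≤ u v x := fun v x => Real.rpow_nonneg (div_nonneg (hA0 v x) hc0.le) _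
  have hw0 : ∀ v x, 0 ≤ w v x := fun v x => Real.rpow_nonneg (div_nonneg (hB0 v x) hc1.le) _
  have hum : ∀ v, Measurable (u v) := fun v =>
    ((wc_measurable hα₀m lam0 v).div_const _).pow_const _
  have hwm : ∀ v, Measurable (w v) := fun v =>
    ((wc_measurable hα₁m lam1 v).div_const _).pow_const _
  have quasi : ∀ {a b c K s : ℝ}, 0 ≤ a → 0 ≤ b → 0 < c → 0 < s → a ≤ 2 ^ K * b →
      ((2:ℝ) ^ K) ^ s ≤ M → (a / c) ^ s ≤ M * (b / c) ^ s := by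
    intro a b c K s ha hb hc hs hab hM
    calc (a / c) ^ s ≤ (2 ^ K * (b / c)) ^ s := by
          refine Real.rpow_le_rpow (by positivity) ?_ hs.le
          rw [← mul_div_assoc]; gcongr
      _ = (2 ^ K) ^ s * (b / c) ^ s := Real.mul_rpow (by positivity) (by positivity)
      _ ≤ _ := by gcongr
  have hres := hcore u w hu0 hw0 hum hwm
    (fun v x y hxy => quasi (hA0 v x) (hA0 v y) hc0 hq₀p (wc_quasi lam0 hK0 v x y hxy) hM0)
    (fun v x y hxy => quasi (hB0 v x) (hB0 v y) hc1 hq₁p (wc_quasi lam1 hK1 v x y hxy) hM1)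
    (by
      intro L
      refine le_trans (lintegral_mono fun x => ?_) h0
      have hr : 0 ≤ p₀ x / q₀ := div_nonneg (zero_le_one.trans (hp₀ x)) hq₀p.le
      rw [← ENNReal.ofReal_rpow_of_nonneg (psum_nonneg (fun v => hu0 v x) L) hr]
      have e : p₀ x = q₀ * (p₀ x / q₀) := by field_simp
      conv_rhs => rw [e, ENNReal.rpow_mul, ENNReal.div_rpow_of_nonneg _ _ hq₀p.le,
        ← ENNReal.rpow_mul, one_div_mul_cancel hq₀p.ne', ENNReal.rpow_one]
      refine ENNReal.rpow_le_rpow ?_ hr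
      simp only [psum]
      rw [ENNReal.ofReal_sum_of_nonneg (fun v _ => hu0 v x)]
      have e2 : ∀ v, ENNReal.ofReal (u v x) =
          ENNReal.ofReal (A v x) ^ q₀ / ENNReal.ofReal c0 ^ q₀ := fun v => by
        simp only [hu]
        rw [← ENNReal.ofReal_rpow_of_nonneg (div_nonneg (hA0 v x) hc0.le) hq₀p.le,
          ENNReal.ofReal_div_of_pos hc0, ENNReal.div_rpow_of_nonneg _ _ hq₀p.le]
      simp only [e2, div_eq_mul_inv]
      rw [← Finset.sum_mul]
      gcongr
      exact ENNReal.sum_le_tsum _)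
    (by
      intro j L m
      have hcar := seqNormInf_carleson (α := α₁) hq₁ lam1 j m
      have hc1q : 0 < c1 ^ q₁ := by positivity
      have e2 : ∀ v x, ENNReal.ofReal (w v x) =
          (ENNReal.ofReal (c1 ^ q₁))⁻¹ * ENNReal.ofReal (B v x ^ q₁) := fun v x => by
        simp only [hw]
        rw [Real.div_rpow (hB0 v x) hc1.le, ENNReal.ofReal_div_of_pos hc1q, div_eq_mul_inv,
          mul_comm]
      have hne : ENNReal.ofReal (c1 ^ q₁) ≠ 0 := by simpa using hc1q
      simp only [e2, ← Finset.mul_sum]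
      rw [lintegral_const_mul' _ _ (ENNReal.inv_ne_top.2 hne), lintegral_finsetSum]
      · calc _ ≤ (ENNReal.ofReal (c1 ^ q₁))⁻¹ *
              (seqNormInf α₁ q₁ lam1 ^ q₁ * volume (dyadicCube n (j : ℤ) m)) := by
              gcongr
              refine le_trans ?_ hcar
              refine le_trans (le_of_eq ?_) (ENNReal.sum_le_tsum (Finset.Ico j (L + 1)))
              refine Finset.sum_congr rfl fun v hv => ?_
              rw [if_pos (Finset.mem_Ico.1 hv).1]
          _ ≤ (ENNReal.ofReal (c1 ^ q₁))⁻¹ *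
              (ENNReal.ofReal (c1 ^ q₁) * volume (dyadicCube n (j : ℤ) m)) := by
              gcongr
              rw [← ENNReal.ofReal_rpow_of_nonneg hc1.le hq₁p.le]
              gcongr
          _ = _ := by
              rw [← mul_assoc, ENNReal.inv_mul_cancel hne ENNReal.ofReal_ne_top, one_mul]
      · exact fun v _ => ((wc_measurable hα₁m lam1 v).pow_const _).ennreal_ofReal)
  -- passage to the limit
  set s : ℕ → En n → ℝ := fun v x => u v x ^ t * w v x ^ (1 - t) with hs
  have hs0 : ∀ v x, 0 ≤ s v x := fun v x =>
    mul_nonneg (Real.rpow_nonneg (hu0 v x) _) (Real.rpow_nonneg (hw0 v x) _)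
  have hsm : ∀ v, Measurable (s v) := fun v => ((hum v).pow_const _).mul ((hwm v).pow_const _)
  have hpq : ∀ x, p₀ x / q₀ / t = p x / q := fun x => by
    rw [hp x, ht]; field_simp
  have hp1 : ∀ x, 1 ≤ p x := fun x => by
    rw [hp x, le_div_iff₀ hθ']; linarith [hp₀ x]
  have hpqpos : ∀ x, 0 < p x / q := fun x => div_pos (zero_lt_one.trans_le (hp1 x)) hqp
  have hpm : Measurable fun x => p x / q := by
    have : p = fun x => p₀ x / (1 - θ) := funext hp
    rw [this]
    exact (hp₀m.div_const _).div_const _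
  set T : En n → ℝ≥0∞ := fun x => ∑' v, ENNReal.ofReal (s v x) with hT
  have hTint : ∫⁻ x, T x ^ (p x / q) ≤ ENNReal.ofReal C := by
    have hlim := lintegral_tendsto_of_tendsto_of_monotone (μ := (volume : Measure (En n)))
      (f := fun L x => (∑ v ∈ Finset.range (L + 1), ENNReal.ofReal (s v x)) ^ (p x / q))
      (F := fun x => T x ^ (p x / q)) ?_ ?_ ?_
    · refine le_of_tendsto' hlim fun L => ?_
      refine le_trans (le_of_eq (lintegral_congr fun x => ?_)) (hres L)
      rw [hpq x, ← ENNReal.ofReal_rpow_of_nonneg (Finset.sum_nonneg fun v _ => hs0 v x)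
        (hpqpos x).le, ENNReal.ofReal_sum_of_nonneg fun v _ => hs0 v x]
    · intro L
      exact ((Finset.measurable_fun_sum _ fun v _ => (hsm v).ennreal_ofReal).pow hpm).aemeasurable
    · refine Filter.Eventually.of_forall fun x a b hab => ?_
      refine ENNReal.rpow_le_rpow ?_ (hpqpos x).le
      exact Finset.sum_le_sum_of_subset (Finset.range_mono (by omega))
    · refine Filter.Eventually.of_forall fun x => ?_
      refine (ENNReal.continuous_rpow_const.tendsto _).comp ?_
      exact (ENNReal.summable.hasSum.tendsto_sum_nat).comp (Filter.tendsto_add_atTop_nat 1)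
  -- conclusion
  set D : ℝ := c0 ^ (1 - θ) * c1 ^ θ with hD
  have hD0 : 0 < D := by positivity
  have hFs : ∀ v x, wc α lam v x ^ q ≤ D ^ q * s v x := by
    intro v x
    have hF : wc α lam v x ≤ A v x ^ (1 - θ) * B v x ^ θ := by
      simp only [hA, hB, wc]
      rw [Real.mul_rpow (by positivity) (norm_nonneg _), Real.mul_rpow (by positivity)
        (norm_nonneg _), ← Real.rpow_mul (by norm_num), ← Real.rpow_mul (by norm_num)]
      have e : (2:ℝ) ^ ((v:ℝ) * (α x + n / 2)) = 2 ^ ((v:ℝ) * (α₀ x + n / 2) * (1 - θ)) *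
          2 ^ ((v:ℝ) * (α₁ x + n / 2) * θ) := by
        rw [← Real.rpow_add (by norm_num), hα x]; congr 1; ring
      rw [e]
      calc _ ≤ 2 ^ ((v:ℝ) * (α₀ x + n / 2) * (1 - θ)) * 2 ^ ((v:ℝ) * (α₁ x + n / 2) * θ) *
            (‖lam0 v (idx v x)‖ ^ (1 - θ) * ‖lam1 v (idx v x)‖ ^ θ) := by
            gcongr; exact hlam _ _
        _ = _ := by ring
    have hAc : 0 ≤ A v x / c0 := div_nonneg (hA0 v x) hc0.le
    have hBc : 0 ≤ B v x / c1 := div_nonneg (hB0 v x) hc1.le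
    calc wc α lam v x ^ q ≤ (A v x ^ (1 - θ) * B v x ^ θ) ^ q :=
          Real.rpow_le_rpow (wc_nonneg _ _ _ _) hF hqp.le
      _ = (D * ((A v x / c0) ^ (1 - θ) * (B v x / c1) ^ θ)) ^ q := by
          rw [Real.div_rpow (hA0 v x) hc0.le, Real.div_rpow (hB0 v x) hc1.le, hD]
          congr 1; field_simp
      _ = D ^ q * s v x := by
          have e3 : ((A v x / c0) ^ (1 - θ) * (B v x / c1) ^ θ) ^ q =
              ((A v x / c0) ^ (1 - θ)) ^ q * ((B v x / c1) ^ θ) ^ q :=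
            Real.mul_rpow (by positivity) (by positivity)
          rw [Real.mul_rpow hD0.le (by positivity), e3]
          simp only [hs, hu, hw]
          rw [← Real.rpow_mul hAc, ← Real.rpow_mul hBc, ← Real.rpow_mul hAc, ← Real.rpow_mul hBc,
            ht1, ht]
          congr 3 <;> field_simp
  have hCp : 0 < C := by linarith
  rw [seqNorm_eq]
  refine sInf_le ⟨ENNReal.mul_pos (by simpa using hCp) (by simpa using hD0), ?_⟩
  have hDne : ENNReal.ofReal D ≠ 0 := by simpa using hD0
  have hCne : ENNReal.ofReal C ≠ 0 := by simpa using hCp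
  have hpt : ∀ x, ((∑' v : ℕ, ENNReal.ofReal (wc α lam v x) ^ q) ^ (1 / q) /
      (ENNReal.ofReal C * ENNReal.ofReal D)) ^ p x ≤ (ENNReal.ofReal C)⁻¹ * T x ^ (p x / q) := by
    intro x
    have hp0 : 0 ≤ p x := zero_le_one.trans (hp1 x)
    have i1 : ∑' v : ℕ, ENNReal.ofReal (wc α lam v x) ^ q ≤ ENNReal.ofReal D ^ q * T x := by
      simp only [hT]
      rw [← ENNReal.tsum_mul_left]
      refine ENNReal.tsum_le_tsum fun v => ?_
      rw [ENNReal.ofReal_rpow_of_nonneg (wc_nonneg _ _ _ _) hqp.le,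
        ENNReal.ofReal_rpow_of_nonneg hD0.le hqp.le, ← ENNReal.ofReal_mul (by positivity)]
      exact ENNReal.ofReal_le_ofReal (hFs v x)
    have i2 : (∑' v : ℕ, ENNReal.ofReal (wc α lam v x) ^ q) ^ (1 / q) ≤
        ENNReal.ofReal D * T x ^ (1 / q) := by
      refine (ENNReal.rpow_le_rpow i1 (by positivity)).trans (le_of_eq ?_)
      rw [ENNReal.mul_rpow_of_nonneg _ _ (by positivity), ← ENNReal.rpow_mul,
        mul_one_div_cancel hqp.ne', ENNReal.rpow_one]
    calc _ ≤ (ENNReal.ofReal D * T x ^ (1 / q) / (ENNReal.ofReal C * ENNReal.ofReal D)) ^ p x := by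
          gcongr
      _ = (T x ^ (1 / q) / ENNReal.ofReal C) ^ p x := by
          rw [mul_comm (ENNReal.ofReal C), ENNReal.mul_div_mul_left _ _ hDne ENNReal.ofReal_ne_top]
      _ = (ENNReal.ofReal C ^ p x)⁻¹ * T x ^ (p x / q) := by
          rw [ENNReal.div_rpow_of_nonneg _ _ hp0, ← ENNReal.rpow_mul, div_eq_mul_inv, mul_comm]
          congr 2; ring
      _ ≤ _ := by
          gcongr
          conv_lhs => rw [← ENNReal.rpow_one (ENNReal.ofReal C)]
          exact ENNReal.rpow_le_rpow_of_exponent_le (by simpa using hC1) (hp1 x)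
  calc _ ≤ ∫⁻ x, (ENNReal.ofReal C)⁻¹ * T x ^ (p x / q) := lintegral_mono hpt
    _ = (ENNReal.ofReal C)⁻¹ * ∫⁻ x, T x ^ (p x / q) :=
        lintegral_const_mul' _ _ (ENNReal.inv_ne_top.2 hCne)
    _ ≤ (ENNReal.ofReal C)⁻¹ * ENNReal.ofReal C := by gcongr
    _ = 1 := ENNReal.inv_mul_cancel hCne ENNReal.ofReal_ne_top

theorem stmt12 {n : ℕ} (θ : ℝ) (hθ : θ ∈ Set.Ioo (0 : ℝ) 1)
    (q₀ q₁ q : ℝ) (hq₀ : 1 ≤ q₀) (hq₁ : 1 ≤ q₁)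
    (p₀ α₀ α₁ p α : En n → ℝ)
    (hp₀ : ∃ c, GlobLogHolder c p₀)
    (hp₀b : ∃ b : ℝ, ∀ x, 1 ≤ p₀ x ∧ p₀ x ≤ b)
    (hα₀ : ∃ c, LocLogHolder c α₀) (hα₁ : ∃ c, LocLogHolder c α₁)
    (hp : ∀ x, 1 / p x = (1 - θ) / p₀ x)
    (hq : 1 / q = (1 - θ) / q₀ + θ / q₁)
    (hα : ∀ x, α x = (1 - θ) * α₀ x + θ * α₁ x) :
    ∃ c : ℝ, 0 < c ∧ ∀ lam lam0 lam1 : ℕ → (Fin n → ℤ) → ℂ,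
      (∀ (j : ℕ) (m : Fin n → ℤ), ‖lam j m‖ ≤ ‖lam0 j m‖ ^ (1 - θ) * ‖lam1 j m‖ ^ θ) →
      seqNorm α p (fun _ => q) lam ≤
        ENNReal.ofReal c *
          (seqNorm α₀ p₀ (fun _ => q₀) lam0 ^ (1 - θ) * seqNormInf α₁ q₁ lam1 ^ θ) := by
  obtain ⟨hθ0, hθ1⟩ := hθ
  obtain ⟨cp, hcp⟩ := hp₀
  obtain ⟨b, hb⟩ := hp₀b
  obtain ⟨ca0, hca0⟩ := hα₀
  obtain ⟨ca1, hca1⟩ := hα₁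
  obtain ⟨K0, hK0n, hK0⟩ := logHolder_level hca0
  obtain ⟨K1, hK1n, hK1⟩ := logHolder_level hca1
  obtain ⟨P1, hP1n, hP1⟩ := logHolder_level hcp.1
  obtain ⟨P2, hP2n, hP2⟩ := logHolder_decay hcp
  have hq₀p : 0 < q₀ := by linarith
  have hq₁p : 0 < q₁ := by linarith
  have hθ' : 0 < 1 - θ := by linarith
  have hqp : 0 < q := by
    have : 0 < 1 / q := by rw [hq]; positivity
    exact one_div_pos.1 this
  have hpx : ∀ x, p x = p₀ x / (1 - θ) := fun x => by
    have := congrArg (fun y : ℝ => 1 / y) (hp x)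
    simpa using this
  set t : ℝ := (1 - θ) * q / q₀ with ht
  have ht1 : 1 - t = θ * q / q₁ := by
    have h1 : q * (1 / q) = 1 := mul_one_div_cancel hqp.ne'
    rw [hq] at h1
    have h2 : q * ((1 - θ) / q₀ + θ / q₁) = (1 - θ) * q / q₀ + θ * q / q₁ := by ring
    linarith
  have htp : 0 < t := by positivity
  have htl : t < 1 := by
    have : 0 < 1 - t := by rw [ht1]; positivity
    linarith
  set M : ℝ := max 1 (max (((2:ℝ) ^ K0) ^ q₀) (((2:ℝ) ^ K1) ^ q₁)) with hM
  have hp₀m : Measurable p₀ := hcp.1.continuous.measurable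
  have habs : ∀ x y, |p₀ x / q₀ - p₀ y / q₀| = |p₀ x - p₀ y| / q₀ := fun x y => by
    rw [← sub_div, abs_div, abs_of_pos hq₀p]
  obtain ⟨C, hCt, hcore⟩ := core (n := n) (r := fun x => p₀ x / q₀) (r0 := 1 / q₀) (R := b / q₀)
    (K1 := P1 / q₀) (K2 := P2 / q₀) (M := M) (t := t) (by positivity) (hp₀m.div_const _)
    (fun x => ⟨by have := (hb x).1; gcongr, by have := (hb x).2; gcongr⟩) (le_max_left _ _)
    (fun v x y hxy => by
      rw [habs, ← mul_div_assoc]; have := hP1 v x y hxy; gcongr)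
    (fun v x y hxy => by
      rw [habs, ← mul_div_assoc]; have := hP2 v x y hxy; gcongr) htp htl
  set C' : ℝ := max 1 C.toReal with hC'
  have hC1 : 1 ≤ C' := le_max_left _ _
  have hCC : C ≤ ENNReal.ofReal C' := by
    rw [← ENNReal.ofReal_toReal hCt]; exact ENNReal.ofReal_le_ofReal (le_max_right _ _)
  refine ⟨C', by linarith, fun lam lam0 lam1 hlam => ?_⟩
  have hpp : ∀ x, 0 < p x := fun x => by
    rw [hpx x]; exact div_pos (by linarith [(hb x).1]) hθ'
  set N0 := seqNorm α₀ p₀ (fun _ => q₀) lam0 with hN0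
  set N1 := seqNormInf α₁ q₁ lam1 with hN1
  have hzero : (∀ v m, lam v m = 0) → seqNorm α p (fun _ => q) lam ≤
      ENNReal.ofReal C' * (N0 ^ (1 - θ) * N1 ^ θ) := fun h => by
    rw [seqNorm_of_zero hqp hpp lam h]; exact bot_le
  by_cases hz0 : N0 = 0
  · refine hzero fun v m => ?_
    have h := hlam v m
    rw [seqNorm_zero hq₀ (fun x => (hb x).1) hK0 lam0 hz0 v m, norm_zero,
      Real.zero_rpow hθ'.ne', zero_mul] at h
    exact norm_le_zero_iff.1 h
  by_cases hz1 : N1 = 0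
  · refine hzero fun v m => ?_
    have h := hlam v m
    rw [seqNormInf_zero hq₁ hK1 lam1 hz1 v m, norm_zero,
      Real.zero_rpow hθ0.ne', mul_zero] at h
    exact norm_le_zero_iff.1 h
  have hCne : ENNReal.ofReal C' ≠ 0 := by
    have : 0 < C' := by linarith
    simpa using this
  by_cases hi0 : N0 = ⊤
  · rw [hi0, ENNReal.top_rpow_of_pos hθ', ENNReal.top_mul, ENNReal.mul_top hCne]
    · exact le_top
    · simp [ENNReal.rpow_eq_zero_iff, hz1, hθ0.le]
  by_cases hi1 : N1 = ⊤
  · rw [hi1, ENNReal.top_rpow_of_pos hθ0, ENNReal.mul_top, ENNReal.mul_top hCne]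
    · exact le_top
    · simp [ENNReal.rpow_eq_zero_iff, hz0, hi0]
  -- the main case
  have hmain : ∀ a : ℝ≥0∞, N0 < a → seqNorm α p (fun _ => q) lam ≤
      ENNReal.ofReal C' * (a ^ (1 - θ) * N1 ^ θ) := by
    intro a ha
    rw [hN0, seqNorm_eq, sInf_lt_iff] at ha
    obtain ⟨c, ⟨hc0, hc⟩, hca⟩ := ha
    have hct : c ≠ ⊤ := hca.ne_top
    have hcr : ENNReal.ofReal c.toReal = c := ENNReal.ofReal_toReal hct
    have hN1r : ENNReal.ofReal N1.toReal = N1 := ENNReal.ofReal_toReal hi1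
    have hcp0 : 0 < c.toReal := ENNReal.toReal_pos hc0.ne' hct
    have hNp0 : 0 < N1.toReal := ENNReal.toReal_pos hz1 hi1
    have := scaled hθ0 hθ1 hq₀ hq₁ hqp hp₀m (fun x => (hb x).1) hca0.continuous.measurable
      hca1.continuous.measurable hK0 hK1 ((le_max_left _ _).trans (le_max_right _ _) :  _ ≤ M)
      ((le_max_right _ _).trans (le_max_right _ _) : _ ≤ M) hpx ht ht1 hα hC1
      (fun u w h1 h2 h3 h4 h5 h6 h7 h8 L => (hcore u w h1 h2 h3 h4 h5 h6 h7 h8 L).trans hCC)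
      hlam hcp0 hNp0 (by rw [hcr]; exact hc) (by rw [hN1r])
    refine this.trans ?_
    rw [ENNReal.ofReal_mul (by positivity), ← ENNReal.ofReal_rpow_of_nonneg hcp0.le hθ'.le,
      ← ENNReal.ofReal_rpow_of_nonneg hNp0.le hθ0.le, hcr, hN1r]
    gcongr
  have hne : (nhdsWithin N0 (Set.Ioi N0)).NeBot := nhdsGT_neBot_of_exists_gt ⟨⊤, lt_top_iff_ne_top.2 hi0⟩
  have hN1t : N1 ^ θ ≠ ⊤ := ENNReal.rpow_ne_top_of_nonneg hθ0.le hi1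
  have hlim : Filter.Tendsto (fun a : ℝ≥0∞ => ENNReal.ofReal C' * (a ^ (1 - θ) * N1 ^ θ))
      (nhdsWithin N0 (Set.Ioi N0)) (nhds (ENNReal.ofReal C' * (N0 ^ (1 - θ) * N1 ^ θ))) := by
    refine ENNReal.Tendsto.const_mul ?_ (Or.inr ENNReal.ofReal_ne_top)
    refine ENNReal.Tendsto.mul_const ?_ (Or.inr hN1t)
    exact (ENNReal.continuous_rpow_const.tendsto N0).mono_left nhdsWithin_le_nhds
  exact ge_of_tendsto hlim (Filter.eventually_of_mem self_mem_nhdsWithin fun a ha => hmain a ha)
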